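/- There exists a reflexive Banach space X with a 1-unconditional Schauder basis such that: (i) every normalized weakly null sequence in X has a subsequence that generates a spreading model that is equivalent to the unit vector basis of ℓ1; (ii) in every infinite dimensional closed subspace of X and for every C ≥ 1 there exists a normalized weakly null sequence that generates a spreading model that is not C-equivalent to the unit vector basis of ℓ1. -/

import Mathlib

/-!
The space `L1SM.X` is the completion of `c₀₀` under a Tsirelson-type norm with infinitely many
weights. Its norming set contains the coordinate functionals and all sums `m_j⁻¹ ∑ f_q` over
families of successive functionals whose positions `q` form a set in the Schreier family of order
`n_j`, subject to the constraint that the weight of `f_q` is at least `q`: the weights have to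
grow with the position.

Lower estimates. Let `(z_i)` be normalized blocks with norming functionals `f_i`. If the weights
of the `f_i` are unbounded, a subsequence of the `f_i` satisfies the growth constraint and can be
combined into a functional of small weight. If infinitely many `f_i` have the same weight `t`, the
families of functionals from which they are built can be combined instead, as these already obey
the constraint. In both cases a subsequence of `(z_i)` satisfies a lower `ℓ₁` estimate on Schreier
sets (`exists_low`), with a constant that depends on `t` and is therefore not uniform over block
sequences.

Upper estimates. Every block sequence has, in its span, a rapidly increasing sequence (`RIS`):
vectors on which functionals of weight `t` are at most `4 / m_t`, up to very large `t`
(`exists_ris_vector`, `exists_RIS`). The growth constraint prevents a functional from acting well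
on many terms of such a sequence, so special convex combinations of order `n_(j-1) + 1 ≤ n_j` have
norm at most `5 / m_j` (`main_est`), while the lower estimate bounds those of order `n_j` below by
`1 / (4 m_j)`. Normalizing combinations of order `n_j` and averaging them thus gives vectors of
norm about `m_j / m_(j+1)`, up to a constant, and this ratio tends to `0` (`exists_bad`). Hence no
block subspace has a uniform `ℓ₁` constant.

The same estimates show that the unit vector basis is shrinking (convex combinations of blocks can
have arbitrarily small norm, `exists_small_convex`) and boundedly complete (by the lower
estimate), so that `X` is reflexive. A gliding hump argument (`exists_glide`) passes from blocks
to weakly null sequences and to infinite dimensional subspaces, and the theorem of Brunel and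
Sucheston (`exists_spreading_model`) provides the spreading models.
-/

open Filter Topology
open scoped ENNReal

noncomputable section

/-! ### Abstract Banach space notions -/

section Abstract

variable {X : Type*} [NormedAddCommGroup X] [NormedSpace ℝ X]

/-- A sequence is normalized if every term has norm one. -/
def Normalized (x : ℕ → X) : Prop := ∀ i, ‖x i‖ = 1

/-- A sequence is weakly null if it tends to `0` in the weak topology. -/
def WeaklyNull (x : ℕ → X) : Prop :=
  ∀ f : X →L[ℝ] ℝ, Tendsto (fun i => f (x i)) atTop (𝓝 (0 : ℝ))

end Abstract

/-- The ℓ₁ norm of finite coefficient vectors (the norms of finite linear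
combinations of the unit vector basis of ℓ₁). -/
def l1Norm : ∀ m : ℕ, (Fin m → ℝ) → ℝ := fun _ a => ∑ i, |a i|

/-- The sup norm of finite coefficient vectors (the norms of finite linear
combinations of the unit vector basis of c₀). -/
def supNorm : ∀ m : ℕ, (Fin m → ℝ) → ℝ := fun _ a => ⨆ i, |a i|

/-- The ℓ_p norm of finite coefficient vectors, `1 ≤ p < ∞`. -/
def lpNormFin (p : ℝ) : ∀ m : ℕ, (Fin m → ℝ) → ℝ := fun _ a => (∑ i, |a i| ^ p) ^ (1 / p)

/-- The ℓ_q norms of finite coefficient vectors, `q ∈ [1,∞]`, where `q = ∞`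
corresponds to `c₀`. -/
def finLqNorm (q : ℝ≥0∞) : ∀ m : ℕ, (Fin m → ℝ) → ℝ := fun m a =>
  if q = ⊤ then supNorm m a else lpNormFin q.toReal m a

/-- The family of seminorms `ν` (of finite combinations of a sequence in a seminormed
space) is `C`-equivalent to the family `μ`:  there are `A B > 0` with `A * B ≤ C` and
`(1/A) * μ ≤ ν ≤ B * μ`. -/
def NormFamEquiv (C : ℝ) (μ ν : ∀ m : ℕ, (Fin m → ℝ) → ℝ) : Prop :=
  ∃ A B : ℝ, 0 < A ∧ 0 < B ∧ A * B ≤ C ∧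
    ∀ (m : ℕ) (a : Fin m → ℝ), (1 / A) * μ m a ≤ ν m a ∧ ν m a ≤ B * μ m a

section Abstract2

variable {X : Type*} [NormedAddCommGroup X] [NormedSpace ℝ X]

/-- The sequence `x` generates the spreading model whose finite-combination
seminorms are given by the family `ν`. -/
def GeneratesSpreadingModel (x : ℕ → X) (ν : ∀ m : ℕ, (Fin m → ℝ) → ℝ) : Prop :=
  ∀ (m : ℕ) (a : Fin m → ℝ), ∀ ε > (0 : ℝ), ∃ N : ℕ, ∀ j : Fin m → ℕ,
    StrictMono j → (∀ i, N ≤ j i) → |‖∑ i, a i • x (j i)‖ - ν m a| < ε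

/-- The array of sequences `A` (row `A i` is the `i`-th sequence) generates the
asymptotic model whose finite-combination seminorms are given by `ν`. -/
def GeneratesAsymptoticModel (A : ℕ → ℕ → X) (ν : ∀ l : ℕ, (Fin l → ℝ) → ℝ) : Prop :=
  ∀ (l : ℕ) (a : Fin l → ℝ), ∀ ε > (0 : ℝ), ∃ N : ℕ, ∀ j : Fin l → ℕ,
    StrictMono j → (∀ i, N ≤ j i) → |‖∑ i, a i • A i (j i)‖ - ν l a| < ε

/-- `e` is a Schauder basis of `X`. -/
def IsSchauderBasis (e : ℕ → X) : Prop :=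
  ∀ x : X, ∃! a : ℕ → ℝ,
    Tendsto (fun n => ∑ i ∈ Finset.range n, a i • e i) atTop (𝓝 x)

/-- The basis `e` is 1-unconditional. -/
def OneUnconditional (e : ℕ → X) : Prop :=
  ∀ (F : Finset ℕ) (a ε : ℕ → ℝ), (∀ i, ε i = 1 ∨ ε i = -1) →
    ‖∑ i ∈ F, (ε i * a i) • e i‖ = ‖∑ i ∈ F, a i • e i‖

/-- `x` is a block sequence with respect to the basis `e`. -/
def IsBlockSeq (e : ℕ → X) (x : ℕ → X) : Prop :=
  ∃ F : ℕ → Finset ℕ, (∀ k, (F k).Nonempty) ∧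
    (∀ k l : ℕ, k < l → ∀ i ∈ F k, ∀ j ∈ F l, i < j) ∧
    ∀ k, x k ≠ 0 ∧ x k ∈ Submodule.span ℝ (e '' ↑(F k))

/-- `z` is a finite block sequence with respect to the basis `e`. -/
def IsFinBlockSeq (e : ℕ → X) {n : ℕ} (z : Fin n → X) : Prop :=
  ∃ F : Fin n → Finset ℕ, (∀ k, (F k).Nonempty) ∧
    (∀ k l : Fin n, k < l → ∀ i ∈ F k, ∀ j ∈ F l, i < j) ∧
    ∀ k, z k ≠ 0 ∧ z k ∈ Submodule.span ℝ (e '' ↑(F k))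

/-- `Y` is a block subspace of `X` (with respect to the basis `e`): the closed
linear span of an infinite normalized block sequence. -/
def IsBlockSubspace (e : ℕ → X) (Y : Set X) : Prop :=
  ∃ y : ℕ → X, IsBlockSeq e y ∧ Normalized y ∧
    Y = closure (↑(Submodule.span ℝ (Set.range y)) : Set X)

/-- The finite sequence `z` is `C`-equivalent to a finite basic sequence whose
finite-combination norms are given by `μ`. -/
def FinSeqEquiv (C : ℝ) {n : ℕ} (μ : (Fin n → ℝ) → ℝ) (z : Fin n → X) : Prop :=
  ∃ A B : ℝ, 0 < A ∧ 0 < B ∧ A * B ≤ C ∧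
    ∀ a : Fin n → ℝ, (1 / A) * μ a ≤ ‖∑ i, a i • z i‖ ∧ ‖∑ i, a i • z i‖ ≤ B * μ a

/-- The finite basic sequence with combination norms `μ` is block representable
in `Y ⊆ X`. -/
def BlockRepresentableIn (e : ℕ → X) (Y : Set X) {n : ℕ} (μ : (Fin n → ℝ) → ℝ) : Prop :=
  ∀ ε > (0 : ℝ), ∃ z : Fin n → X, (∀ i, z i ∈ Y) ∧ IsFinBlockSeq e z ∧
    FinSeqEquiv (1 + ε) μ z

/-- `x` is a (Schauder) basic sequence. -/
def IsBasicSeq (x : ℕ → X) : Prop :=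
  (∀ i, x i ≠ 0) ∧ ∃ K : ℝ, 0 < K ∧ ∀ (a : ℕ → ℝ) (m n : ℕ), m ≤ n →
    ‖∑ i ∈ Finset.range m, a i • x i‖ ≤ K * ‖∑ i ∈ Finset.range n, a i • x i‖

end Abstract2

/-- A plegma of `k` strictly increasing `l`-tuples of naturals. -/
def IsPlegma (k l : ℕ) (s : Fin k → Fin l → ℕ) : Prop :=
  (∀ i, StrictMono (s i)) ∧
  (∀ i₁ i₂ : Fin k, ∀ j₁ j₂ : Fin l, j₁ < j₂ → s i₁ j₁ < s i₂ j₂) ∧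
  (∀ i₁ i₂ : Fin k, i₁ < i₂ → ∀ j, s i₁ j ≤ s i₂ j)

/-- A strict plegma: a plegma with pairwise disjoint tuples. -/
def IsStrictPlegma (k l : ℕ) (s : Fin k → Fin l → ℕ) : Prop :=
  IsPlegma k l s ∧ ∀ i₁ i₂ : Fin k, i₁ ≠ i₂ → ∀ j₁ j₂ : Fin l, s i₁ j₁ ≠ s i₂ j₂

section Abstract3

variable {X : Type*} [NormedAddCommGroup X] [NormedSpace ℝ X]

/-- The `l`-array `x` generates the joint spreading model with finite-combination
seminorms `ν`. -/
def GeneratesJSM (l : ℕ) (x : Fin l → ℕ → X)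
    (ν : ∀ k : ℕ, (Fin l → Fin k → ℝ) → ℝ) : Prop :=
  ∀ (k : ℕ) (a : Fin l → Fin k → ℝ), ∀ ε > (0 : ℝ), ∃ N : ℕ,
    ∀ s : Fin l → Fin k → ℕ, IsStrictPlegma l k s → (∀ i j, N ≤ s i j) →
      |‖∑ i, ∑ j, a i j • x i (s i j)‖ - ν k a| < ε

/-- `X` admits a unique joint spreading model with respect to the family of
sequences `F`. -/
def UniqueJSM (F : Set (ℕ → X)) : Prop :=
  ∃ C : ℝ, 1 ≤ C ∧ ∀ (l : ℕ) (x y : Fin l → ℕ → X),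
    (∀ i, x i ∈ F) → (∀ i, y i ∈ F) →
    ∀ ν μ, GeneratesJSM l x ν → GeneratesJSM l y μ →
      ∃ A B : ℝ, 0 < A ∧ 0 < B ∧ A * B ≤ C ∧
        ∀ (k : ℕ) (a : Fin l → Fin k → ℝ),
          (1 / A) * μ k a ≤ ν k a ∧ ν k a ≤ B * μ k a

/-- `X` admits a unique asymptotic model with respect to the family of
sequences `F`. -/
def UniqueAM (F : Set (ℕ → X)) : Prop :=
  ∀ x y : ℕ → ℕ → X, (∀ i, x i ∈ F) → (∀ i, y i ∈ F) →
    ∀ ν μ, GeneratesAsymptoticModel x ν → GeneratesAsymptoticModel y μ →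
      ∃ C : ℝ, 1 ≤ C ∧ NormFamEquiv C μ ν

end Abstract3

/-- A bundled Banach-space candidate. -/
structure BanachPkg : Type 1 where
  X : Type
  [grp : NormedAddCommGroup X]
  [mod : NormedSpace ℝ X]

attribute [instance] BanachPkg.grp BanachPkg.mod

/-! ### c₀₀ and the norming sets -/

/-- The finitely supported real sequences. -/
abbrev c00 : Type := ℕ →₀ ℝ

/-- Minimum of the support (0 for the zero vector). -/
def minSupp (x : c00) : ℕ := if h : x.support.Nonempty then x.support.min' h else 0

/-- Maximum of the support (0 for the zero vector). -/
def maxSupp (x : c00) : ℕ := if h : x.support.Nonempty then x.support.max' h else 0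

/-- Minimum of a finset of naturals (0 if empty). -/
def finsetMin (F : Finset ℕ) : ℕ := if h : F.Nonempty then F.min' h else 0

/-- `x < y` as successive (block) vectors. -/
def Blocks (x y : c00) : Prop := maxSupp x < minSupp y

/-- The Schreier families. -/
def Schreier : ℕ → Set (Finset ℕ)
  | 0 => {F | ∃ i : ℕ, F = {i}}
  | n + 1 => {F | ∃ (d : ℕ) (G : Fin d → Finset ℕ),
      (∀ k, G k ∈ Schreier n) ∧
      (∀ k l : Fin d, k < l → ∀ i ∈ G k, ∀ j ∈ G l, i < j) ∧
      (∀ i ∈ F, d ≤ i) ∧ F = Finset.univ.biUnion G}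

/-- The family `A_m` of sets of cardinality at most `m`. -/
def SchreierA (m : ℕ) : Set (Finset ℕ) := {F | F.card ≤ m}

/-- The operation `A * B` on families of finite sets. -/
def famStar (A B : Set (Finset ℕ)) : Set (Finset ℕ) :=
  {F | ∃ (d : ℕ) (G : Fin d → Finset ℕ),
      (∀ k, G k ∈ B) ∧ (∀ k, (G k).Nonempty) ∧
      (∀ k l : Fin d, k < l → ∀ i ∈ G k, ∀ j ∈ G l, i < j) ∧
      (Finset.univ.image fun k => finsetMin (G k)) ∈ A ∧ F = Finset.univ.biUnion G}

/-- A finite block sequence in `c00` is `S`-admissible. -/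
def Admissible (S : Set (Finset ℕ)) {d : ℕ} (f : Fin d → c00) : Prop :=
  (∀ q, (f q).support.Nonempty) ∧
  (∀ q r : Fin d, q < r → Blocks (f q) (f r)) ∧
  (Finset.univ.image fun q => minSupp (f q)) ∈ S

/-- The two fixed sequences `(m_j)`, `(n_j)` (indexed here starting at `0`, so that
`m 0` plays the role of `m_1` etc.) together with their growth conditions. -/
structure IWParams where
  m : ℕ → ℕ
  n : ℕ → ℕ
  m_mono : StrictMono m
  n_mono : StrictMono n
  m_first : m 0 = 2
  n_first : n 0 = 1
  growth_exp : ∀ C : ℝ, 1 < C → Tendsto (fun j => C ^ (n j) / (m j : ℝ)) atTop atTop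
  growth_ratio : Tendsto (fun j => (m j : ℝ) / (m (j + 1) : ℝ)) atTop (𝓝 0)
  growth_sum : ∀ (l : ℕ) (js : Fin l → ℕ) (j : ℕ), (∀ i, js i ≤ j) →
    (∏ i, m (js i)) < m (j + 1) ^ 2 → (∑ i, n (js i)) + 1 < n (j + 1)

/-- The action of a functional `f ∈ c00` on a vector `x ∈ c00`. -/
def evalPair (f x : c00) : ℝ := f.sum fun i a => a * x i

/-- The norming set `W_iw`, together with admissible weights: `WIW P f w` means
that `f` belongs to the norming set and `w` is a weight of (one representation of)
`f`; the unit functionals `±e_i^*` have weight `∞`. -/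
inductive WIW (P : IWParams) : c00 → ℕ∞ → Prop
  | unit (i : ℕ) (s : ℝ) (hs : s = 1 ∨ s = -1) : WIW P (Finsupp.single i s) ⊤
  | op (l : ℕ) (hl : 0 < l) (js : Fin l → ℕ) (d : ℕ) (f : Fin d → c00) (w : Fin d → ℕ∞)
      (hf : ∀ q, WIW P (f q) (w q))
      (hadm : Admissible (Schreier (∑ i, P.n (js i))) f)
      (hvfg : ∀ q r : Fin d, (q : ℕ) + 1 = (r : ℕ) → (maxSupp (f q) : ℕ∞) < w r) :
      WIW P (((∏ i, P.m (js i) : ℕ) : ℝ)⁻¹ • ∑ q, f q) ((∏ i, P.m (js i) : ℕ) : ℕ∞)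

/-- Membership in the norming set `W_iw`. -/
def memWIW (P : IWParams) (f : c00) : Prop := ∃ w, WIW P f w

/-- The norm of `X_iw`, on finitely supported vectors. -/
def iwNorm (P : IWParams) (x : c00) : ℝ :=
  sSup {r | ∃ f, memWIW P f ∧ r = evalPair f x}

/-- The dual norm of a finitely supported functional, as an element of `X_iw^*`. -/
def iwDualNorm (P : IWParams) (f : c00) : ℝ :=
  sSup {r | ∃ x : c00, iwNorm P x ≤ 1 ∧ r = evalPair f x}

/-- The auxiliary norming set `W_aux^N` together with admissible weights. -/
inductive WAux (P : IWParams) (N : ℕ) : c00 → ℕ∞ → Prop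
  | unit (i : ℕ) (s : ℝ) (hs : s = 1 ∨ s = -1) : WAux P N (Finsupp.single i s) ⊤
  | op (l : ℕ) (hl : 0 < l) (js : Fin l → ℕ) (d : ℕ) (f : Fin d → c00) (w : Fin d → ℕ∞)
      (hf : ∀ q, WAux P N (f q) (w q))
      (hadm : Admissible (famStar (Schreier (∑ i, P.n (js i))) (SchreierA 3)) f)
      (hlarge : ∀ q : Fin d, 0 < (q : ℕ) → (N : ℕ∞) < w q) :
      WAux P N (((∏ i, P.m (js i) : ℕ) : ℝ)⁻¹ • ∑ q, f q) ((∏ i, P.m (js i) : ℕ) : ℕ∞)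

/-- An `(n, ε)` basic special convex combination. -/
def IsBasicSCC (n : ℕ) (ε : ℝ) (x : c00) : Prop :=
  ∃ F : Finset ℕ, x.support ⊆ F ∧ F ∈ Schreier n ∧ (∀ i, 0 ≤ x i) ∧
    (∑ i ∈ F, x i) = 1 ∧ ∀ G ⊆ F, G ∈ Schreier (n - 1) → (∑ i ∈ G, x i) < ε

/-- An `(n, ε)` special convex combination `∑ c i • x i`. -/
def IsSCC (n : ℕ) (ε : ℝ) {m : ℕ} (c : Fin m → ℝ) (x : Fin m → c00) : Prop :=
  (∀ i, (x i).support.Nonempty) ∧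
  (∀ i j : Fin m, i < j → Blocks (x i) (x j)) ∧
  IsBasicSCC n ε (∑ i, c i • Finsupp.single (minSupp (x i)) (1 : ℝ))

/-- `x` generates, with respect to the norm function `Nrm` on `c00`, the spreading
model whose finite-combination seminorms are `ν`. -/
def GeneratesSMwith (Nrm : c00 → ℝ) (x : ℕ → c00) (ν : ∀ m : ℕ, (Fin m → ℝ) → ℝ) : Prop :=
  ∀ (m : ℕ) (a : Fin m → ℝ), ∀ ε > (0 : ℝ), ∃ N : ℕ, ∀ j : Fin m → ℕ,
    StrictMono j → (∀ i, N ≤ j i) → |Nrm (∑ i, a i • x (j i)) - ν m a| < ε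

/-- The array `A` generates, with respect to the norm function `Nrm` on `c00`, the
asymptotic model whose finite-combination seminorms are `ν`. -/
def GeneratesAMwith (Nrm : c00 → ℝ) (A : ℕ → ℕ → c00) (ν : ∀ l : ℕ, (Fin l → ℝ) → ℝ) : Prop :=
  ∀ (l : ℕ) (a : Fin l → ℝ), ∀ ε > (0 : ℝ), ∃ N : ℕ, ∀ j : Fin l → ℕ,
    StrictMono j → (∀ i, N ≤ j i) → |Nrm (∑ i, a i • A i (j i)) - ν l a| < ε

/-- A normalized block sequence in `c00` with respect to a norm function. -/
def IsNormBlockSeq (Nrm : c00 → ℝ) (y : ℕ → c00) : Prop :=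
  (∀ k, (y k).support.Nonempty) ∧ (∀ k, Blocks (y k) (y (k + 1))) ∧ ∀ k, Nrm (y k) = 1

/-- A `(C, (j_i)_{i ∈ I})` rapidly increasing sequence, `I` a (finite) interval. -/
def IsRIS (P : IWParams) (C : ℝ) (I : Finset ℕ) (j : ℕ → ℕ) (x : ℕ → c00) : Prop :=
  (∀ a ∈ I, ∀ b ∈ I, ∀ c : ℕ, a ≤ c → c ≤ b → c ∈ I) ∧
  (∀ a ∈ I, ∀ b ∈ I, a < b → j a < j b) ∧
  (∀ i ∈ I, (x i).support.Nonempty) ∧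
  (∀ a ∈ I, ∀ b ∈ I, a < b → Blocks (x a) (x b)) ∧
  (∀ i ∈ I, iwNorm P (x i) ≤ C) ∧
  (∀ i ∈ I, ∀ i' ∈ I, i' + 1 = i → (maxSupp (x i') : ℝ) < Real.sqrt (P.m (j i))) ∧
  (∀ i ∈ I, ∀ f w, WIW P f w → w < ((P.m (j i) : ℕ) : ℕ∞) →
    |evalPair f (x i)| ≤ C / (w.toNat : ℝ))

/-- An infinite `(C, (j_i)_i)` rapidly increasing sequence. -/
def IsRISNat (P : IWParams) (C : ℝ) (j : ℕ → ℕ) (x : ℕ → c00) : Prop :=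
  StrictMono j ∧ (∀ i, (x i).support.Nonempty) ∧ (∀ i, Blocks (x i) (x (i + 1))) ∧
  (∀ i, iwNorm P (x i) ≤ C) ∧
  (∀ i, (maxSupp (x i) : ℝ) < Real.sqrt (P.m (j (i + 1)))) ∧
  (∀ i, ∀ f w, WIW P f w → w < ((P.m (j i) : ℕ) : ℕ∞) →
    |evalPair f (x i)| ≤ C / (w.toNat : ℝ))

/-- `X` together with the basis `e` is a realization of the space `X_iw`: a Banach
space in which `c00` sits isometrically (w.r.t. `iwNorm`) and densely. -/
structure IsIWRealization (P : IWParams) (X : Type*) [NormedAddCommGroup X]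
    [NormedSpace ℝ X] (e : ℕ → X) : Prop where
  complete : CompleteSpace X
  dense : DenseRange fun a : c00 => ∑ i ∈ a.support, a i • e i
  norm_eq : ∀ a : c00, ‖∑ i ∈ a.support, a i • e i‖ = iwNorm P a

/-- The conjugate exponent of `p`. -/
def conjExp (p : ℝ) : ℝ := p / (p - 1)

/-- The norming set `W_iw^p` together with admissible weights. -/
inductive WIWp (P : IWParams) (p : ℝ) : c00 → ℕ∞ → Prop
  | unit (i : ℕ) (s : ℝ) (hs : s = 1 ∨ s = -1) : WIWp P p (Finsupp.single i s) ⊤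
  | op (l : ℕ) (hl : 0 < l) (js : Fin l → ℕ) (d : ℕ) (f : Fin d → c00) (w : Fin d → ℕ∞)
      (lam : Fin d → ℝ) (hlam : (∑ q, |lam q| ^ conjExp p) ≤ 1)
      (hf : ∀ q, WIWp P p (f q) (w q))
      (hadm : Admissible (Schreier (∑ i, P.n (js i))) f)
      (hvfg : ∀ q r : Fin d, (q : ℕ) + 1 = (r : ℕ) → (maxSupp (f q) : ℕ∞) < w r) :
      WIWp P p (((∏ i, P.m (js i) : ℕ) : ℝ)⁻¹ • ∑ q, lam q • f q)
        ((∏ i, P.m (js i) : ℕ) : ℕ∞)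

/-- The norm of `X_iw^p` on finitely supported vectors. -/
def iwpNorm (P : IWParams) (p : ℝ) (x : c00) : ℝ :=
  sSup {r | ∃ f, (∃ w, WIWp P p f w) ∧ r = evalPair f x}

/-- The norming set of the space `X̃_iw`, together with admissible weights. -/
inductive WT (P : IWParams) : c00 → ℕ∞ → Prop
  | unit (i : ℕ) (s : ℝ) (hs : s = 1 ∨ s = -1) : WT P (Finsupp.single i s) ⊤
  | op (j : ℕ) (d : ℕ) (f : Fin d → c00) (w : Fin d → ℕ∞)
      (hf : ∀ q, WT P (f q) (w q))
      (hadm : Admissible (Schreier (P.n j)) f)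
      (hvfg : ∀ q r : Fin d, (q : ℕ) + 1 = (r : ℕ) → (maxSupp (f q) : ℕ∞) < w r) :
      WT P ((P.m j : ℝ)⁻¹ • ∑ q, f q) ((P.m j : ℕ) : ℕ∞)

/-- The norm of `X̃_iw` on finitely supported vectors. -/
def tNorm (P : IWParams) (x : c00) : ℝ :=
  sSup {r | ∃ f, (∃ w, WT P f w) ∧ r = evalPair f x}

end
noncomputable section

namespace L1SM

/-! ### Schreier families and special convex combinations -/

/-- The weights `m_j = (j + 4)!`: the ratios `m_(j+1) / m_j = j + 5` tend to infinity, and all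
`m_j` are at least `24`. -/
def mm (j : ℕ) : ℕ := (j + 4).factorial

/-- The order `n_j = j m_j` of the Schreier family attached to the weight `m_j`. -/
def nn (j : ℕ) : ℕ := j * mm j

lemma mm_ge (j : ℕ) : 24 ≤ mm j := by
  unfold mm
  calc 24 = Nat.factorial 4 := rfl
    _ ≤ _ := Nat.factorial_le (by omega)

lemma mm_mono {i j : ℕ} (h : i ≤ j) : mm i ≤ mm j := Nat.factorial_le (by omega)

lemma mm_ge_self (j : ℕ) : j ≤ mm j := by
  have := Nat.self_le_factorial (j + 4)
  unfold mm
  omega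

lemma mm_succ (j : ℕ) : mm (j + 1) = (j + 5) * mm j := by
  unfold mm
  rw [show j + 1 + 4 = (j + 4) + 1 by ring, Nat.factorial_succ]

lemma mm_pos (j : ℕ) : (0 : ℝ) < mm j := by
  have := mm_ge j
  exact_mod_cast (by omega : 0 < mm j)

lemma nn_mono {i j : ℕ} (h : i ≤ j) : nn i ≤ nn j := Nat.mul_le_mul h (mm_mono h)

lemma nn_lt_succ (j : ℕ) : nn j + 1 ≤ nn (j + 1) := by
  unfold nn
  have h1 := mm_mono (Nat.le_succ j)
  have h2 := mm_ge (j + 1)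
  have : (j + 1) * mm (j + 1) = j * mm (j + 1) + mm (j + 1) := by ring
  have h3 : j * mm j ≤ j * mm (j + 1) := Nat.mul_le_mul_left _ h1
  omega

/-- The Schreier families. A set is in the family of order `n + 1` if it is covered by sets of
order `n`, at most `i + 1` of them for every `i` in the set; the shift by one is there because `ℕ`
starts at `0`. Covering, instead of partitioning into successive sets, makes the families
hereditary by definition. -/
def Sch : ℕ → Finset ℕ → Prop
  | 0, F => F.card ≤ 1
  | n + 1, F => ∃ 𝒢 : Finset (Finset ℕ), (∀ G ∈ 𝒢, Sch n G) ∧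
      (∀ i ∈ F, 𝒢.card ≤ i + 1) ∧ ∀ i ∈ F, ∃ G ∈ 𝒢, i ∈ G

lemma Sch.subset : ∀ {n : ℕ} {F G : Finset ℕ}, Sch n G → F ⊆ G → Sch n F
  | 0, _, _, h, hs => (Finset.card_le_card hs).trans h
  | _ + 1, _, _, ⟨𝒢, h1, h2, h3⟩, hs =>
    ⟨𝒢, h1, fun i hi => h2 i (hs hi), fun i hi => h3 i (hs hi)⟩

lemma Sch.succ {n : ℕ} {F : Finset ℕ} (h : Sch n F) : Sch (n + 1) F :=
  ⟨{F}, by simpa using h, by simp, by simp⟩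

lemma Sch.mono {n k : ℕ} {F : Finset ℕ} (h : Sch n F) (hnk : n ≤ k) : Sch k F := by
  induction hnk with
  | refl => exact h
  | step _ ih => exact ih.succ

lemma sch_singleton (n i : ℕ) : Sch n {i} :=
  Sch.mono (n := 0) (by simp [Sch]) (Nat.zero_le n)

lemma sch_one {F : Finset ℕ} (h : ∀ i ∈ F, F.card ≤ i + 1) : Sch 1 F := by
  refine ⟨F.image (fun i => {i}), ?_, ?_, ?_⟩
  · intro G hG
    obtain ⟨i, -, rfl⟩ := Finset.mem_image.1 hG
    exact sch_singleton 0 i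
  · intro i hi
    exact Finset.card_image_le.trans (h i hi)
  · intro i hi
    exact ⟨{i}, Finset.mem_image.2 ⟨i, hi, rfl⟩, by simp⟩

/-- The spreading property: pushing the elements of a Schreier set to the right stays in the
family. -/
lemma sch_spread : ∀ (n : ℕ) {G B : Finset ℕ} {ψ b : ℕ → ℕ}, Sch n G →
    (∀ i ∈ B, ψ i ∈ G) → (∀ i ∈ B, ψ i ≤ b i) → Set.InjOn ψ B → Sch n (B.image b)
  | 0, G, B, ψ, b, hG, h1, _, h3 => by
    have : B.card ≤ G.card := Finset.card_le_card_of_injOn ψ (fun i hi => h1 i hi) h3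
    exact Finset.card_image_le.trans (this.trans hG)
  | n + 1, G, B, ψ, b, ⟨𝒢, g1, g2, g3⟩, h1, h2, h3 => by
    refine ⟨𝒢.image (fun H => (B.filter (fun i => ψ i ∈ H)).image b), ?_, ?_, ?_⟩
    · intro K hK
      obtain ⟨H, hH, rfl⟩ := Finset.mem_image.1 hK
      refine sch_spread n (g1 H hH) (ψ := ψ) ?_ ?_ ?_
      · intro i hi; exact (Finset.mem_filter.1 hi).2
      · intro i hi; exact h2 i (Finset.mem_filter.1 hi).1
      · exact h3.mono (by intro i hi; exact (Finset.mem_filter.1 hi).1)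
    · intro x hx
      obtain ⟨i, hi, rfl⟩ := Finset.mem_image.1 hx
      have := g2 _ (h1 i hi)
      have := h2 i hi
      have : (𝒢.image (fun H => (B.filter (fun i => ψ i ∈ H)).image b)).card ≤ 𝒢.card :=
        Finset.card_image_le
      omega
    · intro x hx
      obtain ⟨i, hi, rfl⟩ := Finset.mem_image.1 hx
      obtain ⟨H, hH, hiH⟩ := g3 _ (h1 i hi)
      exact ⟨_, Finset.mem_image.2 ⟨H, hH, rfl⟩,
        Finset.mem_image.2 ⟨i, Finset.mem_filter.2 ⟨hi, hiH⟩, rfl⟩⟩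

/-- A union of sets of order `r`, lying beyond points `a k` that form a set of order `s`, has
order `s + r`. -/
lemma sch_comp (r : ℕ) {a : ℕ → ℕ} (ha : Function.Injective a) {H : ℕ → Finset ℕ} :
    ∀ (s : ℕ) {F : Finset ℕ}, Sch s (F.image a) → (∀ k ∈ F, Sch r (H k)) →
    (∀ k ∈ F, ∀ q ∈ H k, a k ≤ q) → Sch (s + r) (F.biUnion H)
  | 0, F, hF, h1, _ => by
    have hc : F.card ≤ 1 := by
      have : (F.image a).card = F.card := Finset.card_image_of_injective F ha
      rw [← this]; exact hF
    rw [Nat.zero_add]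
    rcases Finset.card_le_one_iff_subset_singleton.1 hc with ⟨x, hx⟩
    rcases Finset.subset_singleton_iff.1 hx with rfl | rfl
    · simpa using (sch_singleton r 0).subset (Finset.empty_subset _)
    · simpa using h1
  | s + 1, F, ⟨𝒢, g1, g2, g3⟩, h1, h2 => by
    rw [Nat.add_right_comm]
    refine ⟨𝒢.image (fun K => (F.filter (fun k => a k ∈ K)).biUnion H), ?_, ?_, ?_⟩
    · intro K' hK'
      obtain ⟨K, hK, rfl⟩ := Finset.mem_image.1 hK'
      refine sch_comp r ha s ?_ ?_ ?_
      · refine (g1 K hK).subset ?_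
        intro x hx
        obtain ⟨i, hi, rfl⟩ := Finset.mem_image.1 hx
        exact (Finset.mem_filter.1 hi).2
      · intro k hk; exact h1 k (Finset.mem_filter.1 hk).1
      · intro k hk; exact h2 k (Finset.mem_filter.1 hk).1
    · intro q hq
      obtain ⟨k, hk, hq⟩ := Finset.mem_biUnion.1 hq
      have h3 := g2 _ (Finset.mem_image_of_mem a hk)
      have h4 := h2 k hk q hq
      have : (𝒢.image (fun K => (F.filter (fun k => a k ∈ K)).biUnion H)).card ≤ 𝒢.card :=
        Finset.card_image_le
      omega
    · intro q hq
      obtain ⟨k, hk, hq⟩ := Finset.mem_biUnion.1 hq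
      obtain ⟨K, hK, hkK⟩ := g3 _ (Finset.mem_image_of_mem a hk)
      exact ⟨_, Finset.mem_image.2 ⟨K, hK, rfl⟩,
        Finset.mem_biUnion.2 ⟨k, Finset.mem_filter.2 ⟨hk, hkK⟩, hq⟩⟩

/-- If suitable objects exist arbitrarily far out, they can be chosen successively, each beyond
the end `en` of its predecessor. -/
lemma exists_chain {α : Type*} {Q : ℕ → α → Prop} (en : α → ℕ) (h : ∀ N, ∃ x, Q N x) (N₀ : ℕ) :
    ∃ (M : ℕ → ℕ) (x : ℕ → α), StrictMono M ∧ N₀ ≤ M 0 ∧ (∀ i, Q (M i) (x i)) ∧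
      ∀ i, en (x i) ≤ M (i + 1) := by
  choose c hc using h
  let M : ℕ → ℕ := fun i => Nat.rec N₀ (fun _ N => max (N + 1) (en (c N))) i
  refine ⟨M, fun i => c (M i), strictMono_nat_of_lt_succ fun i => ?_, le_rfl,
    fun i => hc _, fun i => ?_⟩
  · exact lt_of_lt_of_le (Nat.lt_succ_self _) (le_max_left _ _)
  · exact le_max_right _ _

/-- The measure `μ` gives mass at most `ε` to every set of indices whose right endpoints `a (i +
1)` form a Schreier set of order `s`. -/
def Small (a : ℕ → ℕ) (s : ℕ) (ε : ℝ) (μ : ℕ →₀ ℝ) : Prop :=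
  ∀ B : Finset ℕ, Sch s (B.image fun i => a (i + 1)) → ∑ i ∈ B, μ i ≤ ε

/-- A finitely supported probability vector. -/
structure IsProb (μ : ℕ →₀ ℝ) : Prop where
  nonneg : ∀ i, 0 ≤ μ i
  total : ∑ i ∈ μ.support, μ i = 1

lemma IsProb.sum_le {μ : ℕ →₀ ℝ} (h : IsProb μ) (B : Finset ℕ) : ∑ i ∈ B, μ i ≤ 1 := by
  rw [← h.total]
  calc ∑ i ∈ B, μ i = ∑ i ∈ B ∩ μ.support, μ i := by
        symm; apply Finset.sum_subset Finset.inter_subset_left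
        intro i hi hn
        by_contra h0
        exact hn (Finset.mem_inter.2 ⟨hi, by simpa using h0⟩)
    _ ≤ _ := Finset.sum_le_sum_of_subset_of_nonneg Finset.inter_subset_right
        (fun i _ _ => h.nonneg i)

lemma IsProb.total_of_subset {μ : ℕ →₀ ℝ} (h : IsProb μ) {B : Finset ℕ} (hB : μ.support ⊆ B) :
    ∑ i ∈ B, μ i = 1 := by
  rw [← h.total]
  symm
  apply Finset.sum_subset hB
  intro i _ hn
  simpa using hn

lemma isProb_avg {A : Finset ℕ} (hA : A.Nonempty) {μ : ℕ → ℕ →₀ ℝ} (h : ∀ k ∈ A, IsProb (μ k)) :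
    IsProb ((A.card : ℝ)⁻¹ • ∑ k ∈ A, μ k) := by
  have hc : (0 : ℝ) < A.card := by exact_mod_cast hA.card_pos
  constructor
  · intro i
    simp only [Finsupp.smul_apply, Finsupp.finsetSum_apply, smul_eq_mul]
    exact mul_nonneg (by positivity) (Finset.sum_nonneg fun k hk => (h k hk).nonneg i)
  · set ν := (A.card : ℝ)⁻¹ • ∑ k ∈ A, μ k with hν
    set B := ν.support ∪ A.biUnion (fun k => (μ k).support)
    have : ∑ i ∈ ν.support, ν i = ∑ i ∈ B, ν i := by
      apply Finset.sum_subset Finset.subset_union_left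
      intro i _ hn
      simpa using hn
    rw [this, hν]
    simp only [Finsupp.smul_apply, Finsupp.finsetSum_apply, smul_eq_mul]
    rw [← Finset.mul_sum, Finset.sum_comm, Finset.sum_congr rfl (g := fun _ => (1 : ℝ))]
    · simp; field_simp
    · intro k hk
      apply (h k hk).total_of_subset
      exact (Finset.subset_biUnion_of_mem (fun k => (μ k).support) hk).trans
        Finset.subset_union_right

/-- Averaging successive probability vectors raises the order of smallness by one. A set of order
`s + 1` is a union of few sets of order `s`, their number being bounded by its first element. The
first vector met contributes at most `1` before averaging, and the smallness of all later ones
makes up for that number. -/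
lemma small_avg {a : ℕ → ℕ} (ha : StrictMono a) {s : ℕ} {A : Finset ℕ} (hA : A.Nonempty)
    {M : ℕ → ℕ} (hM : StrictMono M) {μ : ℕ → ℕ →₀ ℝ} (h : ∀ k ∈ A, IsProb (μ k))
    (hsupp : ∀ k ∈ A, ∀ i ∈ (μ k).support, M k ≤ i ∧ i < M (k + 1))
    (hsm : ∀ k ∈ A, Small a s (((a (M k) : ℝ) + 1)⁻¹ * (A.card : ℝ)⁻¹) (μ k)) :
    Small a (s + 1) (2 * (A.card : ℝ)⁻¹) ((A.card : ℝ)⁻¹ • ∑ k ∈ A, μ k) := by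
  intro B hB
  have hc : (0 : ℝ) < A.card := by exact_mod_cast hA.card_pos
  simp only [Finsupp.smul_apply, Finsupp.finsetSum_apply, smul_eq_mul]
  rw [← Finset.mul_sum, Finset.sum_comm, mul_comm]
  refine mul_le_mul_of_nonneg_right ?_ (by positivity)
  obtain ⟨𝒢, g1, g2, g3⟩ := hB
  set A' := A.filter (fun k => ∃ i ∈ B, i ∈ (μ k).support) with hA'
  have hz : ∑ k ∈ A, ∑ i ∈ B, μ k i = ∑ k ∈ A', ∑ i ∈ B, μ k i := by
    symm; apply Finset.sum_subset (Finset.filter_subset _ _)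
    intro k hk hn
    apply Finset.sum_eq_zero
    intro i hi
    by_contra h0
    exact hn (Finset.mem_filter.2 ⟨hk, i, hi, by simpa using h0⟩)
  rw [hz]
  by_cases hne : A'.Nonempty
  swap
  · rw [Finset.not_nonempty_iff_eq_empty.1 hne]; simp
  set k₀ := A'.min' hne
  have hk₀ : k₀ ∈ A' := A'.min'_mem hne
  obtain ⟨hk₀A, i₀, hi₀B, hi₀⟩ := Finset.mem_filter.1 hk₀
  have hcard : 𝒢.card ≤ a (i₀ + 1) + 1 := g2 _ (Finset.mem_image_of_mem _ hi₀B)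
  have hi₀M : i₀ + 1 ≤ M (k₀ + 1) := (hsupp k₀ hk₀A i₀ hi₀).2
  rw [← Finset.add_sum_erase _ _ hk₀]
  have h1 : ∑ i ∈ B, μ k₀ i ≤ 1 := (h k₀ hk₀A).sum_le B
  have h2 : ∀ k ∈ A'.erase k₀, ∑ i ∈ B, μ k i ≤ (A.card : ℝ)⁻¹ := by
    intro k hk
    obtain ⟨hne', hkA'⟩ := Finset.mem_erase.1 hk
    have hkA := (Finset.mem_filter.1 hkA').1
    have hlt : k₀ < k := lt_of_le_of_ne (A'.min'_le k hkA') (Ne.symm hne')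
    have hle : a (i₀ + 1) ≤ a (M k) := ha.monotone (hi₀M.trans (hM.monotone hlt))
    calc ∑ i ∈ B, μ k i
        ≤ ∑ G ∈ 𝒢, ∑ i ∈ B.filter (fun i => a (i + 1) ∈ G), μ k i := by
          simp only [Finset.sum_filter]
          rw [Finset.sum_comm]
          apply Finset.sum_le_sum
          intro i hi
          obtain ⟨G, hG, hiG⟩ := g3 _ (Finset.mem_image_of_mem _ hi)
          calc μ k i = if a (i + 1) ∈ G then μ k i else 0 := by rw [if_pos hiG]
            _ ≤ _ := Finset.single_le_sum (f := fun G => if a (i + 1) ∈ G then μ k i else 0)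
                (fun G _ => by split_ifs; exacts [(h k hkA).nonneg i, le_rfl]) hG
      _ ≤ ∑ G ∈ 𝒢, (((a (M k) : ℝ) + 1)⁻¹ * (A.card : ℝ)⁻¹) := by
          apply Finset.sum_le_sum
          intro G hG
          apply hsm k hkA
          apply (g1 G hG).subset
          intro x hx
          obtain ⟨i, hi, rfl⟩ := Finset.mem_image.1 hx
          exact (Finset.mem_filter.1 hi).2
      _ = 𝒢.card * ((a (M k) : ℝ) + 1)⁻¹ * (A.card : ℝ)⁻¹ := by
          rw [Finset.sum_const, nsmul_eq_mul, mul_assoc]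
      _ ≤ 1 * (A.card : ℝ)⁻¹ := by
          apply mul_le_mul_of_nonneg_right _ (by positivity)
          rw [← div_eq_mul_inv, div_le_one (by positivity)]
          exact_mod_cast (by omega : 𝒢.card ≤ a (M k) + 1)
      _ = _ := one_mul _
  have h3 : ∑ k ∈ A'.erase k₀, ∑ i ∈ B, μ k i ≤ 1 := by
    calc _ ≤ ∑ k ∈ A'.erase k₀, (A.card : ℝ)⁻¹ := Finset.sum_le_sum h2
      _ = (A'.erase k₀).card * (A.card : ℝ)⁻¹ := by rw [Finset.sum_const, nsmul_eq_mul]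
      _ ≤ A.card * (A.card : ℝ)⁻¹ := by
          apply mul_le_mul_of_nonneg_right _ (by positivity)
          exact_mod_cast Finset.card_le_card
            ((Finset.erase_subset _ _).trans (Finset.filter_subset _ _))
      _ = 1 := mul_inv_cancel₀ hc.ne'
  linarith

lemma avg_supp {A : Finset ℕ} {μ : ℕ → ℕ →₀ ℝ} {c : ℝ} {i : ℕ}
    (hi : i ∈ (c • ∑ k ∈ A, μ k).support) : ∃ k ∈ A, i ∈ (μ k).support := by
  by_contra! hn
  have : ∀ k ∈ A, μ k i = 0 := fun k hk => by simpa using hn k hk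
  apply Finsupp.mem_support_iff.1 hi
  simp only [Finsupp.smul_apply, Finsupp.finsetSum_apply, smul_eq_mul]
  rw [Finset.sum_eq_zero this, mul_zero]

/-- Special convex combinations: probability vectors that start arbitrarily far out, live on a
Schreier set of order `s + 1`, and are small on all those of order `s`. -/
lemma exists_scc {a : ℕ → ℕ} (ha : StrictMono a) : ∀ (s : ℕ) (ε : ℝ), 0 < ε → ∀ N : ℕ,
    ∃ μ : ℕ →₀ ℝ, IsProb μ ∧ (∀ i ∈ μ.support, N ≤ i) ∧ Sch (s + 1) (μ.support.image a) ∧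
      Small a s ε μ
  | 0, ε, hε, N => by
    obtain ⟨K, hK⟩ := exists_nat_gt (ε⁻¹)
    have hK0 : (0 : ℝ) < K := (inv_pos.2 hε).trans hK
    have hKn : 0 < K := by exact_mod_cast hK0
    set A := Finset.Ico (N + K) (N + K + K) with hA
    have hcard : A.card = K := by simp [hA]
    have hne : A.Nonempty := Finset.card_pos.1 (by omega)
    set δ : ℕ → ℕ →₀ ℝ := fun k => Finsupp.single k 1
    have hprob : ∀ k ∈ A, IsProb (δ k) := by
      intro k _
      constructor
      · intro i; simp only [δ, Finsupp.single_apply]; split_ifs <;> norm_num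
      · simp [δ]
    have hsub : ∀ i ∈ ((A.card : ℝ)⁻¹ • ∑ k ∈ A, δ k).support, i ∈ A := by
      intro i hi
      obtain ⟨k, hk, hik⟩ := avg_supp hi
      have hik : i = k := by simpa [δ, Finsupp.single_apply, eq_comm] using hik
      rwa [hik]
    refine ⟨(A.card : ℝ)⁻¹ • ∑ k ∈ A, δ k, isProb_avg hne hprob, ?_, ?_, ?_⟩
    · intro i hi
      have := Finset.mem_Ico.1 (hsub i hi)
      omega
    · refine sch_one ?_
      intro x hx
      obtain ⟨i, hi, rfl⟩ := Finset.mem_image.1 hx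
      have h1 := Finset.mem_Ico.1 (hsub i hi)
      have h2 := ha.id_le i
      have h3 : (Finset.image a ((A.card : ℝ)⁻¹ • ∑ k ∈ A, δ k).support).card ≤ A.card :=
        Finset.card_image_le.trans (Finset.card_le_card hsub)
      simp only [id] at h2
      omega
    · intro B hB
      have hB1 : B.card ≤ 1 := by
        have : (B.image fun i => a (i + 1)).card = B.card :=
          Finset.card_image_of_injective B (fun i j h => by
            have := ha.injective h; omega)
        rw [← this]; exact hB
      have hpt : ∀ i, ((A.card : ℝ)⁻¹ • ∑ k ∈ A, δ k) i ≤ ε := by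
        intro i
        simp only [Finsupp.smul_apply, Finsupp.finsetSum_apply, smul_eq_mul, δ,
          Finsupp.single_apply, Finset.sum_ite_eq']
        rw [hcard]
        have : (K : ℝ)⁻¹ ≤ ε := inv_le_of_inv_le₀ hε hK.le
        split_ifs
        · simpa using this
        · simpa using hε.le
      rcases Finset.card_le_one_iff_subset_singleton.1 hB1 with ⟨x, hx⟩
      rcases Finset.subset_singleton_iff.1 hx with rfl | rfl
      · simpa using hε.le
      · rw [Finset.sum_singleton]; exact hpt x
  | s + 1, ε, hε, N => by
    obtain ⟨K, hK⟩ := exists_nat_gt (2 * ε⁻¹)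
    have hK0 : (0 : ℝ) < K := (by positivity : 0 < 2 * ε⁻¹).trans hK
    have hKn : 0 < K := by exact_mod_cast hK0
    obtain ⟨M, μ, hM, hM0, hQ, hen⟩ := exists_chain (α := ℕ →₀ ℝ)
      (Q := fun N μ => IsProb μ ∧ (∀ i ∈ μ.support, N ≤ i) ∧ Sch (s + 1) (μ.support.image a) ∧
        Small a s (((a N : ℝ) + 1)⁻¹ * (K : ℝ)⁻¹) μ)
      (fun μ => μ.support.sup id + 1)
      (fun N => exists_scc ha s _ (by positivity) N) (N + K)
    have hcard : (Finset.range K).card = K := Finset.card_range K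
    have hne : (Finset.range K).Nonempty := Finset.card_pos.1 (by omega)
    have hsup : ∀ k ∈ Finset.range K, ∀ i ∈ (μ k).support, M k ≤ i ∧ i < M (k + 1) := by
      intro k _ i hi
      have h1 := hen k
      have h2 : id i ≤ (μ k).support.sup id := Finset.le_sup hi
      simp only [id] at h2
      exact ⟨(hQ k).2.1 i hi, by omega⟩
    have hMge : ∀ k, N + K ≤ M k := fun k => hM0.trans (hM.monotone (Nat.zero_le k))
    refine ⟨((Finset.range K).card : ℝ)⁻¹ • ∑ k ∈ Finset.range K, μ k,
      isProb_avg hne (fun k _ => (hQ k).1), ?_, ?_, ?_⟩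
    · intro i hi
      obtain ⟨k, hk, hik⟩ := avg_supp hi
      have := (hsup k hk i hik).1
      have := hMge k
      omega
    · refine ⟨(Finset.range K).image (fun k => (μ k).support.image a), ?_, ?_, ?_⟩
      · intro G hG
        obtain ⟨k, -, rfl⟩ := Finset.mem_image.1 hG
        exact (hQ k).2.2.1
      · intro x hx
        obtain ⟨i, hi, rfl⟩ := Finset.mem_image.1 hx
        obtain ⟨k, hk, hik⟩ := avg_supp hi
        have h1 := (hsup k hk i hik).1
        have h2 := hMge k
        have h3 := ha.id_le i
        have h4 : ((Finset.range K).image (fun k => (μ k).support.image a)).card ≤ _ :=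
          Finset.card_image_le
        simp only [id] at h3
        omega
      · intro x hx
        obtain ⟨i, hi, rfl⟩ := Finset.mem_image.1 hx
        obtain ⟨k, hk, hik⟩ := avg_supp hi
        exact ⟨_, Finset.mem_image_of_mem _ hk, Finset.mem_image_of_mem a hik⟩
    · have := small_avg ha hne hM (fun k _ => (hQ k).1) hsup (s := s)
        (by intro k _; rw [hcard]; exact (hQ k).2.2.2)
      intro B hB
      refine (this B hB).trans ?_
      rw [hcard, ← div_eq_mul_inv, div_le_iff₀ hK0]
      rw [← div_eq_mul_inv, div_lt_iff₀ hε] at hK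
      linarith

/-! ### The norming set -/

/-- The action of a functional, given by its coefficients, on `c₀₀`. -/
def ev (f : ℕ → ℝ) : (ℕ →₀ ℝ) →ₗ[ℝ] ℝ := Finsupp.linearCombination ℝ f

lemma ev_eq (f : ℕ → ℝ) (x : ℕ →₀ ℝ) {B : Finset ℕ} (hB : x.support ⊆ B) :
    ev f x = ∑ i ∈ B, x i * f i := by
  rw [ev, Finsupp.linearCombination_apply, Finsupp.sum_of_support_subset x hB] <;> simp

lemma ev_congr {f g : ℕ → ℝ} {x : ℕ →₀ ℝ} (h : ∀ i ∈ x.support, f i = g i) : ev f x = ev g x := by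
  rw [ev_eq f x subset_rfl, ev_eq g x subset_rfl]
  exact Finset.sum_congr rfl fun i hi => by rw [h i hi]

lemma ev_eq_zero {f : ℕ → ℝ} {x : ℕ →₀ ℝ} (h : ∀ i ∈ x.support, f i = 0) : ev f x = 0 := by
  rw [ev_eq f x subset_rfl]
  exact Finset.sum_eq_zero fun i hi => by rw [h i hi, mul_zero]

lemma ev_smul_sum {ι : Type*} (c : ℝ) (F : Finset ι) (f : ι → ℕ → ℝ) (x : ℕ →₀ ℝ) :
    ev (fun i => c * ∑ k ∈ F, f k i) x = c * ∑ k ∈ F, ev (f k) x := by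
  simp only [ev_eq _ x subset_rfl]
  rw [Finset.sum_comm, Finset.mul_sum]
  refine Finset.sum_congr rfl fun i _ => ?_
  rw [← Finset.mul_sum]; ring

lemma ev_mul (c : ℝ) (f : ℕ → ℝ) (x : ℕ →₀ ℝ) : ev (fun i => c * f i) x = c * ev f x := by
  simpa using ev_smul_sum c {()} (fun _ => f) x

/-- The norming set, with weights; the recorded weight is the index `j`, not `m_j`. It consists of
multiples of coordinate functionals by scalars of modulus at most one, of weight `⊤`, and of the
sums `m_j⁻¹ ∑ f q` over `q ∈ G`, where `G` is a Schreier set of order `n_j`, each `f q` is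
supported between `q` and the next element of `G`, and the weight of `f q` is at least `q`. -/
inductive W : (ℕ → ℝ) → ℕ∞ → Prop
  | unit (i : ℕ) (s : ℝ) (hs : |s| ≤ 1) : W (Pi.single i s) ⊤
  | op (j : ℕ) (G : Finset ℕ) (hG : Sch (nn j) G) (f : ℕ → ℕ → ℝ) (w : ℕ → ℕ∞)
      (hf : ∀ q ∈ G, W (f q) (w q))
      (hlow : ∀ q ∈ G, ∀ i, f q i ≠ 0 → q ≤ i)
      (hsep : ∀ q ∈ G, ∀ q' ∈ G, q < q' → ∀ i, f q i ≠ 0 → i < q')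
      (hw : ∀ q ∈ G, (q : ℕ∞) ≤ w q) :
      W (fun i => (mm j : ℝ)⁻¹ * ∑ q ∈ G, f q i) j

/-- The norming set is stable under multiplication by sequences bounded by one; this makes the
basis unconditional. -/
lemma W.mul {f : ℕ → ℝ} {w : ℕ∞} (hf : W f w) {h : ℕ → ℝ} (hh : ∀ i, |h i| ≤ 1) :
    W (fun i => h i * f i) w := by
  induction hf with
  | unit i s hs =>
    have : (fun k => h k * (Pi.single i s : ℕ → ℝ) k) = Pi.single i (h i * s) := by
      funext k
      by_cases hk : k = i
      · subst hk; simp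
      · simp [hk]
    rw [this]
    refine W.unit _ _ ?_
    rw [abs_mul]
    exact mul_le_one₀ (hh i) (abs_nonneg _) hs
  | op j G hG f w hf hlow hsep hw ih =>
    have : (fun i => h i * ((mm j : ℝ)⁻¹ * ∑ q ∈ G, f q i)) =
        fun i => (mm j : ℝ)⁻¹ * ∑ q ∈ G, h i * f q i := by
      funext i; rw [← Finset.mul_sum]; ring
    rw [this]
    exact W.op j G hG (fun q i => h i * f q i) w ih
      (fun q hq i hi => hlow q hq i (right_ne_zero_of_mul hi))
      (fun q hq q' hq' hlt i hi => hsep q hq q' hq' hlt i (right_ne_zero_of_mul hi)) hw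

lemma W.restrict {f : ℕ → ℝ} {w : ℕ∞} (hf : W f w) (p : ℕ → Prop) [DecidablePred p] :
    W (fun i => if p i then f i else 0) w := by
  have := hf.mul (h := fun i => if p i then 1 else 0) (fun i => by split_ifs <;> simp)
  convert this using 2
  simp

lemma sum_disjoint_abs_le {G : Finset ℕ} {f : ℕ → ℕ → ℝ}
    (hlow : ∀ q ∈ G, ∀ i, f q i ≠ 0 → q ≤ i)
    (hsep : ∀ q ∈ G, ∀ q' ∈ G, q < q' → ∀ i, f q i ≠ 0 → i < q')
    (i : ℕ) (hb : ∀ q ∈ G, |f q i| ≤ 1) : |∑ q ∈ G, f q i| ≤ 1 := by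
  by_cases hex : ∃ q ∈ G, f q i ≠ 0
  · obtain ⟨q, hq, hne⟩ := hex
    rw [Finset.sum_eq_single q]
    · exact hb q hq
    · intro q' hq' hqq'
      by_contra hne'
      rcases lt_or_gt_of_ne hqq' with h | h
      · exact absurd (hlow q hq i hne) (not_le.2 (hsep q' hq' q hq h i hne'))
      · exact absurd (hlow q' hq' i hne') (not_le.2 (hsep q hq q' hq' h i hne))
    · intro h; exact absurd hq h
  · push Not at hex
    rw [Finset.sum_eq_zero hex]; simp

lemma W.abs_le {f : ℕ → ℝ} {w : ℕ∞} (hf : W f w) (i : ℕ) : |f i| ≤ 1 := by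
  induction hf with
  | unit k s hs =>
    by_cases hk : i = k
    · subst hk; simpa using hs
    · simp [hk]
  | op j G hG f w hf hlow hsep hw ih =>
    rw [abs_mul]
    refine mul_le_one₀ ?_ (abs_nonneg _) (sum_disjoint_abs_le hlow hsep i ih)
    rw [abs_of_pos (inv_pos.2 (mm_pos j))]
    have := mm_ge j
    exact inv_le_one_of_one_le₀ (by exact_mod_cast (by omega : 1 ≤ mm j))

lemma W.abs_le_wt {f : ℕ → ℝ} {t : ℕ} (hf : W f t) (i : ℕ) : |f i| ≤ (mm t : ℝ)⁻¹ := by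
  generalize hw : (t : ℕ∞) = w at hf
  cases hf with
  | unit k s hs => exact absurd hw (ENat.natCast_ne_top t)
  | op j G hG f w hf hlow hsep hw' =>
    have hj : t = j := by exact_mod_cast hw
    subst hj
    rw [abs_mul, abs_of_pos (inv_pos.2 (mm_pos t))]
    exact mul_le_of_le_one_right (inv_pos.2 (mm_pos t)).le
      (sum_disjoint_abs_le hlow hsep i fun q hq => (hf q hq).abs_le i)

/-- The constructor `op` with summands indexed by any type, placed by an injective position map.
-/
lemma W.op' {ι : Type*} [Nonempty ι] (j : ℕ) (F : Finset ι) (pos : ι → ℕ)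
    (hinj : Set.InjOn pos F) (hG : Sch (nn j) (F.image pos)) (f : ι → ℕ → ℝ) (w : ι → ℕ∞)
    (hf : ∀ k ∈ F, W (f k) (w k))
    (hlow : ∀ k ∈ F, ∀ i, f k i ≠ 0 → pos k ≤ i)
    (hsep : ∀ k ∈ F, ∀ k' ∈ F, pos k < pos k' → ∀ i, f k i ≠ 0 → i < pos k')
    (hw : ∀ k ∈ F, (pos k : ℕ∞) ≤ w k) :
    W (fun i => (mm j : ℝ)⁻¹ * ∑ k ∈ F, f k i) j := by
  have hκ : ∀ q ∈ F.image pos, ∃ k, k ∈ F ∧ pos k = q := fun q hq => by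
    simpa using hq
  choose! κ hκF hκp using hκ
  have hκ' : ∀ k ∈ F, κ (pos k) = k := fun k hk =>
    hinj (hκF _ (Finset.mem_image_of_mem _ hk)) hk (hκp _ (Finset.mem_image_of_mem _ hk))
  have : (fun i => (mm j : ℝ)⁻¹ * ∑ k ∈ F, f k i) =
      fun i => (mm j : ℝ)⁻¹ * ∑ q ∈ F.image pos, f (κ q) i := by
    funext i
    rw [Finset.sum_image hinj]
    congr 1
    exact Finset.sum_congr rfl fun k hk => by rw [hκ' k hk]
  rw [this]
  refine W.op j _ hG _ (fun q => w (κ q)) (fun q hq => hf _ (hκF q hq)) ?_ ?_ ?_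
  · intro q hq i hi
    have := hlow _ (hκF q hq) i hi
    rwa [hκp q hq] at this
  · intro q hq q' hq' hlt i hi
    have := hsep _ (hκF q hq) _ (hκF q' hq') (by rwa [hκp q hq, hκp q' hq']) i hi
    rwa [hκp q' hq'] at this
  · intro q hq
    have := hw _ (hκF q hq)
    rwa [hκp q hq] at this

/-- On a vector supported in `[α, β)`, only the summands indexed in `[α, β)` and the last summand
`g` indexed before `α` act. -/
lemma op_decomp {j : ℕ} {G : Finset ℕ} {f : ℕ → ℕ → ℝ}
    (hlow : ∀ q ∈ G, ∀ i, f q i ≠ 0 → q ≤ i)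
    (hsep : ∀ q ∈ G, ∀ q' ∈ G, q < q' → ∀ i, f q i ≠ 0 → i < q')
    {α β : ℕ} {y : ℕ →₀ ℝ} (hy : ∀ i ∈ y.support, α ≤ i ∧ i < β) :
    ∃ g : ℕ → ℝ, (g = 0 ∨ ∃ q ∈ G, q < α ∧ (∀ q' ∈ G, q' < α → q' ≤ q) ∧ g = f q) ∧
      ev (fun i => (mm j : ℝ)⁻¹ * ∑ q ∈ G, f q i) y =
        (mm j : ℝ)⁻¹ * (ev g y + ∑ q ∈ G.filter (fun q => α ≤ q ∧ q < β), ev (f q) y) := by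
  rw [ev_smul_sum]
  have hhi : ∀ q ∈ G, β ≤ q → ev (f q) y = 0 := by
    intro q hq hle
    apply ev_eq_zero
    intro i hi
    by_contra hne
    have := hlow q hq i hne
    have := (hy i hi).2
    omega
  have hsplit : ∑ q ∈ G, ev (f q) y = ∑ q ∈ G.filter (fun q => q < α), ev (f q) y +
      ∑ q ∈ G.filter (fun q => α ≤ q ∧ q < β), ev (f q) y := by
    rw [← Finset.sum_filter_add_sum_filter_not G (fun q => q < α)]
    congr 1
    symm
    apply Finset.sum_subset
    · intro q hq
      simp only [Finset.mem_filter] at hq ⊢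
      exact ⟨hq.1, by omega⟩
    · intro q hq hn
      simp only [Finset.mem_filter] at hq hn
      exact hhi q hq.1 (by by_contra hc; exact hn ⟨hq.1, by omega, by omega⟩)
  by_cases hne : (G.filter (fun q => q < α)).Nonempty
  · set q₀ := (G.filter (fun q => q < α)).max' hne
    have hq₀ : q₀ ∈ G.filter (fun q => q < α) := Finset.max'_mem _ _
    have hq₀' := Finset.mem_filter.1 hq₀
    refine ⟨f q₀, Or.inr ⟨q₀, hq₀'.1, hq₀'.2, fun q' hq' hlt =>
      Finset.le_max' _ _ (Finset.mem_filter.2 ⟨hq', hlt⟩), rfl⟩, ?_⟩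
    rw [hsplit, Finset.sum_eq_single_of_mem q₀ hq₀]
    intro q hq hqne
    have hq' := Finset.mem_filter.1 hq
    have hlt : q < q₀ := lt_of_le_of_ne (Finset.le_max' _ _ hq) hqne
    apply ev_eq_zero
    intro i hi
    by_contra hne
    have := hsep q hq'.1 q₀ hq₀'.1 hlt i hne
    have := (hy i hi).1
    omega
  · refine ⟨0, Or.inl rfl, ?_⟩
    rw [hsplit, Finset.not_nonempty_iff_eq_empty.1 hne, Finset.sum_empty,
      ev_eq_zero (f := 0) (by simp)]

/-! ### The norm -/

/-- The norm on `c₀₀` induced by the norming set. -/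
def N (x : ℕ →₀ ℝ) : ℝ := ⨆ f : {f : ℕ → ℝ // ∃ w, W f w}, |ev f.1 x|

instance : Nonempty {f : ℕ → ℝ // ∃ w, W f w} := ⟨⟨_, _, W.unit 0 0 (by simp)⟩⟩

lemma W.ev_le_l1 {f : ℕ → ℝ} {w : ℕ∞} (hf : W f w) (x : ℕ →₀ ℝ) :
    |ev f x| ≤ ∑ i ∈ x.support, |x i| := by
  rw [ev_eq f x subset_rfl]
  refine (Finset.abs_sum_le_sum_abs _ _).trans (Finset.sum_le_sum fun i _ => ?_)
  rw [abs_mul]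
  exact mul_le_of_le_one_right (abs_nonneg _) (hf.abs_le i)

lemma W.ev_le {f : ℕ → ℝ} {w : ℕ∞} (hf : W f w) (x : ℕ →₀ ℝ) : |ev f x| ≤ N x :=
  le_ciSup (f := fun f : {f : ℕ → ℝ // ∃ w, W f w} => |ev f.1 x|)
    ⟨∑ i ∈ x.support, |x i|, by rintro _ ⟨⟨f, w, hf⟩, rfl⟩; exact hf.ev_le_l1 x⟩ ⟨f, w, hf⟩

lemma N_le {x : ℕ →₀ ℝ} {c : ℝ} (h : ∀ f w, W f w → |ev f x| ≤ c) : N x ≤ c :=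
  ciSup_le fun ⟨f, w, hf⟩ => h f w hf

lemma exists_norming {x : ℕ →₀ ℝ} {c : ℝ} (h : c < N x) : ∃ f w, W f w ∧ c < ev f x := by
  obtain ⟨⟨f, w, hf⟩, hlt⟩ := exists_lt_of_lt_ciSup h
  rcases le_total 0 (ev f x) with h0 | h0
  · exact ⟨f, w, hf, by simpa [abs_of_nonneg h0] using hlt⟩
  · refine ⟨fun i => (-1) * f i, w, hf.mul (by simp), ?_⟩
    rw [ev_mul]
    simpa [abs_of_nonpos h0] using hlt

lemma N_nonneg (x : ℕ →₀ ℝ) : 0 ≤ N x := Real.iSup_nonneg fun _ => abs_nonneg _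

lemma abs_apply_le (x : ℕ →₀ ℝ) (i : ℕ) : |x i| ≤ N x := by
  have := (W.unit i 1 (by simp)).ev_le x
  rw [ev_eq _ x (B := insert i x.support) (Finset.subset_insert _ _)] at this
  simpa [Pi.single_apply] using this

lemma N_add_le (x y : ℕ →₀ ℝ) : N (x + y) ≤ N x + N y := by
  refine N_le fun f w hf => ?_
  rw [map_add]
  exact (abs_add_le _ _).trans (add_le_add (hf.ev_le x) (hf.ev_le y))

lemma N_smul_le (c : ℝ) (x : ℕ →₀ ℝ) : N (c • x) ≤ |c| * N x := by
  refine N_le fun f w hf => ?_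
  rw [map_smul, smul_eq_mul, abs_mul]
  exact mul_le_mul_of_nonneg_left (hf.ev_le x) (abs_nonneg _)

lemma N_zero : N 0 = 0 :=
  le_antisymm (N_le fun f w _ => by simp) (N_nonneg _)

lemma N_smul (c : ℝ) (x : ℕ →₀ ℝ) : N (c • x) = |c| * N x := by
  rcases eq_or_ne c 0 with rfl | hc
  · simp [N_zero]
  refine le_antisymm (N_smul_le c x) ?_
  have h := N_smul_le c⁻¹ (c • x)
  rw [smul_smul, inv_mul_cancel₀ hc, one_smul, abs_inv] at h
  have : 0 < |c| := abs_pos.2 hc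
  rw [← div_eq_inv_mul, le_div_iff₀ this] at h
  linarith

lemma N_pos {x : ℕ →₀ ℝ} (h : x ≠ 0) : 0 < N x := by
  obtain ⟨i, hi⟩ := Finsupp.ne_iff.1 h
  exact (abs_pos.2 hi).trans_le (abs_apply_le x i)

lemma N_mono {x y : ℕ →₀ ℝ} (h : ∀ i, |x i| ≤ |y i|) : N x ≤ N y := by
  refine N_le fun f w hf => ?_
  have hm := hf.mul (h := fun i => x i / y i) (fun i => by
    rw [abs_div]; exact div_le_one_of_le₀ (h i) (abs_nonneg _))
  convert hm.ev_le y using 2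
  have hs : x.support ⊆ y.support := by
    intro i hi
    simp only [Finsupp.mem_support_iff] at hi ⊢
    intro h0
    have := h i
    rw [h0, abs_zero] at this
    exact hi (abs_nonpos_iff.1 this)
  rw [ev_eq _ x hs, ev_eq _ y subset_rfl]
  refine Finset.sum_congr rfl fun i hi => ?_
  have : y i ≠ 0 := by simpa using hi
  field_simp

lemma N_single_le (i : ℕ) (c : ℝ) : N (Finsupp.single i c) ≤ |c| := by
  refine N_le fun f w hf => ?_
  rw [ev_eq f _ (B := {i}) Finsupp.support_single_subset]
  simp only [Finset.sum_singleton, Finsupp.single_eq_same, abs_mul]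
  exact mul_le_of_le_one_right (abs_nonneg _) (hf.abs_le i)

/-! ### Block sequences and the upper estimate -/

/-- A block sequence: `z k` is supported in `[a k, a (k + 1))`. -/
structure Block (a : ℕ → ℕ) (z : ℕ → ℕ →₀ ℝ) : Prop where
  mono : StrictMono a
  supp : ∀ k, ∀ i ∈ (z k).support, a k ≤ i ∧ i < a (k + 1)

/-- The map `c ↦ ∑ c i • z i` on coefficient vectors. -/
abbrev LC (z : ℕ → ℕ →₀ ℝ) : (ℕ →₀ ℝ) →ₗ[ℝ] (ℕ →₀ ℝ) := Finsupp.linearCombination ℝ z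

lemma LC_eq (z : ℕ → ℕ →₀ ℝ) (c : ℕ →₀ ℝ) : LC z c = ∑ i ∈ c.support, c i • z i := by
  rw [LC, Finsupp.linearCombination_apply]; rfl

lemma ev_LC (f : ℕ → ℝ) (z : ℕ → ℕ →₀ ℝ) (c : ℕ →₀ ℝ) :
    ev f (LC z c) = ∑ i ∈ c.support, c i * ev f (z i) := by
  simp [LC_eq, map_sum]

/-- The blocks that contain an element of a Schreier set of order `n ≤ s` have small mass. -/
lemma hit_small {a : ℕ → ℕ} (ha : StrictMono a) {s n : ℕ} (hns : n ≤ s) {ε : ℝ} {μ : ℕ →₀ ℝ}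
    (hsm : Small a s ε μ) {G : Finset ℕ} (hG : Sch n G) (A : Finset ℕ) :
    ∑ i ∈ A.filter (fun i => ∃ q ∈ G, a i ≤ q ∧ q < a (i + 1)), μ i ≤ ε := by
  apply hsm
  have hψ : ∀ i ∈ A.filter (fun i => ∃ q ∈ G, a i ≤ q ∧ q < a (i + 1)),
      ∃ q, q ∈ G ∧ a i ≤ q ∧ q < a (i + 1) := fun i hi => by
    obtain ⟨q, h⟩ := (Finset.mem_filter.1 hi).2
    exact ⟨q, h⟩
  choose! ψ h1 h2 h3 using hψ
  refine (sch_spread n hG (ψ := ψ) h1 (fun i hi => (h3 i hi).le) ?_).mono hns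
  intro i hi k hk hik
  have hi1 := h2 i hi; have hi2 := h3 i hi; have hk1 := h2 k hk; have hk2 := h3 k hk
  rw [hik] at hi1 hi2
  have := ha.lt_iff_lt.1 (hi1.trans_lt hk2)
  have := ha.lt_iff_lt.1 (hk1.trans_lt hi2)
  omega

/-- On a block that contains no element of `G`, a single summand acts. -/
lemma unhit {j : ℕ} {G : Finset ℕ} {f : ℕ → ℕ → ℝ}
    (hlow : ∀ q ∈ G, ∀ i, f q i ≠ 0 → q ≤ i)
    (hsep : ∀ q ∈ G, ∀ q' ∈ G, q < q' → ∀ i, f q i ≠ 0 → i < q')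
    {α β : ℕ} {y : ℕ →₀ ℝ} (hy : ∀ i ∈ y.support, α ≤ i ∧ i < β)
    (hun : ¬ ∃ q ∈ G, α ≤ q ∧ q < β) :
    ∃ g : ℕ → ℝ, (g = 0 ∨ ∃ q ∈ G, q < α ∧ (∀ q' ∈ G, q' < α → q' ≤ q) ∧ g = f q) ∧
      ev (fun i => (mm j : ℝ)⁻¹ * ∑ q ∈ G, f q i) y = (mm j : ℝ)⁻¹ * ev g y := by
  obtain ⟨g, hg, he⟩ := op_decomp (j := j) hlow hsep hy
  refine ⟨g, hg, ?_⟩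
  have : G.filter (fun q => α ≤ q ∧ q < β) = ∅ := by
    apply Finset.filter_eq_empty_iff.2
    intro q hq h
    exact hun ⟨q, hq, h⟩
  rw [he, this, Finset.sum_empty, add_zero]

/-- A functional of weight `t` is, on average, at most `1 / m_t + ε` on a small convex combination
of blocks of the unit ball. -/
lemma upper {a : ℕ → ℕ} {u : ℕ → ℕ →₀ ℝ} (hu : Block a u) (hN : ∀ i, N (u i) ≤ 1) {μ : ℕ →₀ ℝ}
    (hμ : IsProb μ) {s : ℕ} {ε : ℝ} (hsm : Small a s ε μ) {f : ℕ → ℝ} {t : ℕ} (hf : W f t)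
    (hts : nn t ≤ s) : ∑ i ∈ μ.support, μ i * |ev f (u i)| ≤ (mm t : ℝ)⁻¹ + ε := by
  have hf0 := hf
  generalize hw : (t : ℕ∞) = w at hf
  cases hf with
  | unit k s hs => exact absurd hw (ENat.natCast_ne_top t)
  | op j G hG f w hf hlow hsep hw' =>
    have hj : t = j := by exact_mod_cast hw
    subst hj
    have hm := inv_pos.2 (mm_pos t)
    rw [← Finset.sum_filter_add_sum_filter_not μ.support
      (fun i => ∃ q ∈ G, a i ≤ q ∧ q < a (i + 1)), add_comm]
    refine add_le_add ?_ (le_trans (Finset.sum_le_sum fun i _ => ?_)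
      (hit_small hu.mono hts hsm hG μ.support))
    · refine (Finset.sum_le_sum (g := fun i => μ i * (mm t : ℝ)⁻¹) fun i hi => ?_).trans ?_
      · refine mul_le_mul_of_nonneg_left ?_ (hμ.nonneg i)
        obtain ⟨g, hg, he⟩ := unhit (j := t) hlow hsep (hu.supp i) (Finset.mem_filter.1 hi).2
        rw [he, abs_mul, abs_of_pos hm]
        refine mul_le_of_le_one_right hm.le ?_
        rcases hg with rfl | ⟨q, hq, -, -, rfl⟩
        · rw [ev_eq_zero (by simp)]; simp
        · exact ((hf q hq).ev_le _).trans (hN i)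
      · rw [← Finset.sum_mul]
        exact mul_le_of_le_one_left hm.le (hμ.sum_le _)
    · exact mul_le_of_le_one_right (hμ.nonneg i) ((hf0.ev_le _).trans (hN i))

/-- A rapidly increasing sequence: blocks of norm at most one, on which the functionals of weight
`t` are at most `4 / m_t` for all `t` below a bound that grows with the index and the start of the
block. -/
structure RIS (a : ℕ → ℕ) (y : ℕ → ℕ →₀ ℝ) : Prop extends Block a y where
  norm_le : ∀ i, N (y i) ≤ 1
  est : ∀ i f (t : ℕ), W f t → t < a i * mm i → |ev f (y i)| ≤ 4 * (mm t : ℝ)⁻¹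

lemma inv_mm_anti {j t : ℕ} (h : j ≤ t) : (mm t : ℝ)⁻¹ ≤ (mm j : ℝ)⁻¹ :=
  inv_anti₀ (mm_pos j) (by exact_mod_cast mm_mono h)

/-- A functional of weight at least `j` is at most `4 / m_j` on all but one of the `y i` with `i ≥
j`. -/
lemma bigOne {a : ℕ → ℕ} {y : ℕ → ℕ →₀ ℝ} (hy : RIS a y) {f : ℕ → ℝ} {w : ℕ∞} (hf : W f w)
    {j : ℕ} (hj : (j : ℕ∞) ≤ w) :
    ∃ i₀, ∀ i, j ≤ i → i ≠ i₀ → |ev f (y i)| ≤ 4 * (mm j : ℝ)⁻¹ := by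
  have hmj := inv_pos.2 (mm_pos j)
  by_cases hw : w = ⊤
  · subst hw
    generalize hw : (⊤ : ℕ∞) = w at hf
    cases hf with
    | op j G hG f w hf hlow hsep hw' => exact absurd hw.symm (ENat.natCast_ne_top j)
    | unit k s hs =>
      by_cases hex : ∃ i, k ∈ (y i).support
      · obtain ⟨i₀, hi₀⟩ := hex
        refine ⟨i₀, fun i _ hne => ?_⟩
        rw [ev_eq_zero, abs_zero]
        · positivity
        · intro x hx
          rw [Pi.single_apply, if_neg]
          rintro rfl
          have h1 := hy.supp _ _ hi₀
          have h2 := hy.supp _ _ hx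
          have := hy.mono.lt_iff_lt.1 (h1.1.trans_lt h2.2)
          have := hy.mono.lt_iff_lt.1 (h2.1.trans_lt h1.2)
          omega
      · push Not at hex
        refine ⟨0, fun i _ hne => ?_⟩
        rw [ev_eq_zero, abs_zero]
        · positivity
        · intro x hx
          rw [Pi.single_apply, if_neg]
          rintro rfl
          exact hex i hx
  · lift w to ℕ using hw
    have hjt : j ≤ w := by exact_mod_cast hj
    have hself : ∀ i, a i * mm i ≤ w → i ≤ w := fun i hi => by
      have h1 := hy.mono.id_le i
      have h2 := mm_ge i
      simp only [id] at h1
      nlinarith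
    refine ⟨Nat.findGreatest (fun i => a i * mm i ≤ w) w, fun i hji hne => ?_⟩
    rcases lt_or_ge w (a i * mm i) with h | h
    · refine (hy.est i f w hf h).trans ?_
      have := inv_mm_anti hjt
      linarith
    · set i₀ := Nat.findGreatest (fun i => a i * mm i ≤ w) w with hi₀
      have hspec : a i₀ * mm i₀ ≤ w := Nat.findGreatest_spec (P := fun i => a i * mm i ≤ w) (hself i h) h
      have hle : i ≤ i₀ := Nat.le_findGreatest (hself i h) h
      have hlt : i < i₀ := lt_of_le_of_ne hle hne
      have ha : a (i + 1) ≤ a i₀ := hy.mono.monotone hlt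
      have hev : |ev f (y i)| ≤ (a i₀ : ℝ) * (mm w : ℝ)⁻¹ := by
        rw [ev_eq f _ (B := Finset.range (a (i + 1)))
          (fun x hx => Finset.mem_range.2 (hy.supp i x hx).2)]
        refine (Finset.abs_sum_le_sum_abs _ _).trans ?_
        refine (Finset.sum_le_card_nsmul _ _ ((mm w : ℝ)⁻¹) fun x _ => ?_).trans ?_
        · rw [abs_mul]
          have h1 := (abs_apply_le (y i) x).trans (hy.norm_le i)
          have h2 := hf.abs_le_wt x
          nlinarith [abs_nonneg (f x), abs_nonneg (y i x)]
        · rw [nsmul_eq_mul, Finset.card_range]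
          refine mul_le_mul_of_nonneg_right (by exact_mod_cast ha) (inv_pos.2 (mm_pos w)).le
      have h3 : (a i₀ : ℝ) * mm i₀ ≤ mm w := by exact_mod_cast hspec.trans (mm_ge_self w)
      have h4 : (a i₀ : ℝ) * (mm w : ℝ)⁻¹ ≤ (mm i₀ : ℝ)⁻¹ := by
        rw [← div_eq_mul_inv, ← one_div, div_le_div_iff₀ (mm_pos w) (mm_pos i₀)]
        linarith
      have h5 := inv_mm_anti (hji.trans hle)
      linarith

/-- On a small convex combination of a rapidly increasing sequence every norming functional is at
most `5 / m_j`. The proof is by induction on the functional. Weights at least `j` are covered by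
`bigOne`. For smaller weights, the blocks met by `G` and the exceptional blocks of its summands
have small mass; on the remaining blocks a single summand acts, with a factor of at most `1 / 24`.
-/
lemma main_est {a : ℕ → ℕ} {y : ℕ → ℕ →₀ ℝ} (hy : RIS a y) {j s : ℕ} (hjs : ∀ t < j, nn t ≤ s)
    {μ : ℕ →₀ ℝ} (hμ : IsProb μ) (hsupp : ∀ i ∈ μ.support, j ≤ i) {ε : ℝ} (hsm : Small a s ε μ)
    (hε : ε ≤ (mm j : ℝ)⁻¹) {f : ℕ → ℝ} {w : ℕ∞} (hf : W f w) :
    ∑ i ∈ μ.support, μ i * |ev f (y i)| ≤ 5 * (mm j : ℝ)⁻¹ := by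
  have hmj := inv_pos.2 (mm_pos j)
  have hbig : ∀ f w, W f w → (j : ℕ∞) ≤ w →
      ∑ i ∈ μ.support, μ i * |ev f (y i)| ≤ 5 * (mm j : ℝ)⁻¹ := by
    intro f w hf hjw
    obtain ⟨i₀, hi₀⟩ := bigOne hy hf hjw
    have hone : μ i₀ ≤ ε := by
      have := hsm {i₀} (by rw [Finset.image_singleton]; exact sch_singleton _ _)
      simpa using this
    calc ∑ i ∈ μ.support, μ i * |ev f (y i)|
        ≤ ∑ i ∈ μ.support, (μ i * (4 * (mm j : ℝ)⁻¹) + if i = i₀ then μ i else 0) := by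
          refine Finset.sum_le_sum fun i hi => ?_
          have h0 := hμ.nonneg i
          split_ifs with h
          · have := mul_le_of_le_one_right h0 ((hf.ev_le (y i)).trans (hy.norm_le i))
            nlinarith
          · have := mul_le_mul_of_nonneg_left (hi₀ i (hsupp i hi) h) h0
            linarith
      _ ≤ 4 * (mm j : ℝ)⁻¹ + μ i₀ := by
          rw [Finset.sum_add_distrib, ← Finset.sum_mul, hμ.total, one_mul]
          gcongr
          rw [Finset.sum_ite_eq']
          split_ifs
          · exact le_rfl
          · exact hμ.nonneg _
      _ ≤ _ := by linarith
  have hf0 := hf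
  induction hf with
  | unit k s hs => exact hbig _ _ hf0 le_top
  | op t G hG f w hf hlow hsep hw' ih =>
    rcases le_or_gt j t with hjt | htj
    · exact hbig _ _ hf0 (by exact_mod_cast hjt)
    -- Children indexed at `j` or later have weight at least `j`. Of the earlier ones only the last,
    -- `gs`, can act on the blocks `y i` with `i ≥ j` that `G` does not meet.
    obtain ⟨gs, hgs, hgs'⟩ : ∃ gs : ℕ → ℝ, (∑ i ∈ μ.support, μ i * |ev gs (y i)| ≤ 5 * (mm j : ℝ)⁻¹) ∧
        ∀ q ∈ G, q < j → (∀ q' ∈ G, q' < j → q' ≤ q) → gs = f q := by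
      by_cases hne : (G.filter (· < j)).Nonempty
      · have hm := Finset.mem_filter.1 (Finset.max'_mem _ hne)
        refine ⟨f ((G.filter (· < j)).max' hne), ih _ hm.1 (hf _ hm.1), fun q hq hqj hmax => ?_⟩
        congr 1
        exact le_antisymm (hmax _ hm.1 hm.2) (Finset.le_max' _ _ (Finset.mem_filter.2 ⟨hq, hqj⟩))
      · refine ⟨0, ?_, fun q hq hqj _ => ?_⟩
        · rw [Finset.sum_eq_zero]
          · positivity
          · intro i _
            rw [ev_eq_zero (by simp)]; simp
        · exact absurd ⟨q, Finset.mem_filter.2 ⟨hq, hqj⟩⟩ hne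
    have hi₀ : ∀ q, ∃ i₀, q ∈ G → j ≤ q → ∀ i, j ≤ i → i ≠ i₀ → |ev (f q) (y i)| ≤ 4 * (mm j : ℝ)⁻¹ := by
      intro q
      by_cases hq : q ∈ G ∧ j ≤ q
      · obtain ⟨i₀, h⟩ := bigOne hy (hf q hq.1) (j := j)
          (le_trans (by exact_mod_cast hq.2) (hw' q hq.1))
        exact ⟨i₀, fun _ _ => h⟩
      · exact ⟨0, fun h1 h2 => absurd ⟨h1, h2⟩ hq⟩
    choose i₀ hi₀ using hi₀
    set F : ℕ → ℝ := fun i => (mm t : ℝ)⁻¹ * ∑ q ∈ G, f q i with hF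
    set pB : ℕ → Prop := fun i => ∃ q ∈ G, a i ≤ q ∧ q < a (i + 1) with hpB
    set pE : ℕ → Prop := fun i => ∃ q ∈ G, q ≤ a (i + 1) ∧ i₀ q = i with hpE
    have hE : ∑ i ∈ μ.support.filter pE, μ i ≤ ε := by
      apply hsm
      have hψ : ∀ i ∈ μ.support.filter pE, ∃ q, q ∈ G ∧ q ≤ a (i + 1) ∧ i₀ q = i := fun i hi => by
        obtain ⟨q, h⟩ := (Finset.mem_filter.1 hi).2
        exact ⟨q, h⟩
      choose! ψ h1 h2 h3 using hψ
      refine (sch_spread _ hG (ψ := ψ) h1 h2 ?_).mono (hjs t htj)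
      intro i hi k hk hik
      rw [← h3 i hi, ← h3 k hk, hik]
    have hB : ∑ i ∈ μ.support.filter pB, μ i ≤ ε := hit_small hy.mono (hjs t htj) hsm hG _
    have hmt : (mm t : ℝ)⁻¹ ≤ 1 / 24 := by
      rw [one_div]
      exact inv_anti₀ (by norm_num) (by exact_mod_cast mm_ge t)
    have hmt0 := inv_pos.2 (mm_pos t)
    calc ∑ i ∈ μ.support, μ i * |ev F (y i)|
        ≤ ∑ i ∈ μ.support, ((if pB i then μ i else 0) + (if pE i then μ i else 0) +
            (1 / 24) * (μ i * (4 * (mm j : ℝ)⁻¹) + μ i * |ev gs (y i)|)) := by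
          refine Finset.sum_le_sum fun i hi => ?_
          have h0 := hμ.nonneg i
          have hji := hsupp i hi
          have hia : i ≤ a i := hy.mono.id_le i
          have hle1 := mul_le_of_le_one_right h0 ((hf0.ev_le (y i)).trans (hy.norm_le i))
          have hpos : 0 ≤ (1 / 24) * (μ i * (4 * (mm j : ℝ)⁻¹) + μ i * |ev gs (y i)|) := by positivity
          by_cases hb : pB i
          · rw [if_pos hb]
            have : 0 ≤ if pE i then μ i else 0 := by split_ifs <;> simp [h0]
            linarith
          by_cases he : pE i
          · rw [if_neg hb, if_pos he]
            linarith
          rw [if_neg hb, if_neg he]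
          obtain ⟨g, hg, hev⟩ := unhit (j := t) hlow hsep (hy.supp i) hb
          rw [← hF] at hev
          rw [hev, abs_mul, abs_of_pos hmt0]
          have hg1 : |ev g (y i)| ≤ 4 * (mm j : ℝ)⁻¹ + |ev gs (y i)| := by
            rcases hg with rfl | ⟨q, hq, hqa, hmax, rfl⟩
            · rw [ev_eq_zero (by simp), abs_zero]; positivity
            · rcases le_or_gt j q with hjq | hqj
              · have hne : i ≠ i₀ q := fun h =>
                  he ⟨q, hq, (hqa.trans (hy.mono (Nat.lt_succ_self i))).le, h.symm⟩
                have := hi₀ q hq hjq i hji hne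
                have := abs_nonneg (ev gs (y i))
                linarith
              · rw [hgs' q hq hqj fun q' hq' hlt => hmax q' hq' (by omega)]
                linarith
          have := mul_le_mul hmt hg1 (abs_nonneg _) (by norm_num)
          have := mul_le_mul_of_nonneg_left this h0
          linarith
      _ = ∑ i ∈ μ.support.filter pB, μ i + ∑ i ∈ μ.support.filter pE, μ i +
            (1 / 24) * (4 * (mm j : ℝ)⁻¹ + ∑ i ∈ μ.support, μ i * |ev gs (y i)|) := by
          rw [Finset.sum_add_distrib, Finset.sum_add_distrib, Finset.sum_filter, Finset.sum_filter,
            ← Finset.mul_sum, Finset.sum_add_distrib, ← Finset.sum_mul, hμ.total, one_mul]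
      _ ≤ _ := by linarith

lemma abs_ev_LC_le {f : ℕ → ℝ} {z : ℕ → ℕ →₀ ℝ} {μ : ℕ →₀ ℝ} (hμ : ∀ i, 0 ≤ μ i) :
    |ev f (LC z μ)| ≤ ∑ i ∈ μ.support, μ i * |ev f (z i)| := by
  rw [ev_LC]
  refine (Finset.abs_sum_le_sum_abs _ _).trans_eq (Finset.sum_congr rfl fun i _ => ?_)
  rw [abs_mul, abs_of_nonneg (hμ i)]

lemma N_RIS_le {a : ℕ → ℕ} {y : ℕ → ℕ →₀ ℝ} (hy : RIS a y) {j s : ℕ} (hjs : ∀ t < j, nn t ≤ s)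
    {μ : ℕ →₀ ℝ} (hμ : IsProb μ) (hsupp : ∀ i ∈ μ.support, j ≤ i) {ε : ℝ} (hsm : Small a s ε μ)
    (hε : ε ≤ (mm j : ℝ)⁻¹) : N (LC y μ) ≤ 5 * (mm j : ℝ)⁻¹ :=
  N_le fun _ _ hf => (abs_ev_LC_le hμ.nonneg).trans (main_est hy hjs hμ hsupp hsm hε hf)

/-! ### Lower ℓ₁ estimates and averages of small norm -/

lemma LC_LC (z : ℕ → ℕ →₀ ℝ) (κ : ℕ → ℕ →₀ ℝ) (c : ℕ →₀ ℝ) :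
    LC (fun k => LC z (κ k)) c = LC z (LC κ c) := by
  rw [LC_eq, LC_eq κ, map_sum]
  simp

lemma LC_supp {z : ℕ → ℕ →₀ ℝ} {c : ℕ →₀ ℝ} {i : ℕ} (hi : i ∈ (LC z c).support) :
    ∃ k ∈ c.support, i ∈ (z k).support := by
  by_contra! hn
  apply Finsupp.mem_support_iff.1 hi
  rw [LC_eq, Finsupp.finsetSum_apply]
  refine Finset.sum_eq_zero fun k hk => ?_
  have := hn k hk
  simp only [Finsupp.mem_support_iff, not_not] at this
  simp [this]

lemma Block.LC {a : ℕ → ℕ} {z : ℕ → ℕ →₀ ℝ} (hz : Block a z) {M : ℕ → ℕ} (hM : StrictMono M)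
    {κ : ℕ → ℕ →₀ ℝ} (hκ : ∀ k, ∀ i ∈ (κ k).support, M k ≤ i ∧ i < M (k + 1)) :
    Block (a ∘ M) (fun k => LC z (κ k)) := by
  refine ⟨hz.mono.comp hM, fun k i hi => ?_⟩
  obtain ⟨l, hl, hil⟩ := LC_supp hi
  have h1 := hz.supp l i hil
  have h2 := hκ k l hl
  exact ⟨(hz.mono.monotone h2.1).trans h1.1, h1.2.trans_le (hz.mono.monotone h2.2)⟩

lemma N_sum_le {ι : Type*} (s : Finset ι) (x : ι → ℕ →₀ ℝ) : N (∑ i ∈ s, x i) ≤ ∑ i ∈ s, N (x i) := by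
  classical
  induction s using Finset.induction_on with
  | empty => simp [N_zero]
  | insert i s hi ih =>
    rw [Finset.sum_insert hi, Finset.sum_insert hi]
    exact (N_add_le _ _).trans (by linarith)

lemma N_LC_le {z : ℕ → ℕ →₀ ℝ} (hz : ∀ i, N (z i) ≤ 1) (c : ℕ →₀ ℝ) :
    N (LC z c) ≤ ∑ i ∈ c.support, |c i| := by
  rw [LC_eq]
  refine (N_sum_le _ _).trans (Finset.sum_le_sum fun i _ => ?_)
  rw [N_smul]
  exact mul_le_of_le_one_right (abs_nonneg _) (hz i)

lemma IsProb.N_le {z : ℕ → ℕ →₀ ℝ} (hz : ∀ i, N (z i) ≤ 1) {c : ℕ →₀ ℝ} (hc : IsProb c) :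
    N (LC z c) ≤ 1 := by
  refine (N_LC_le hz c).trans ?_
  rw [← hc.total]
  exact Finset.sum_le_sum fun i _ => (abs_of_nonneg (hc.nonneg i)).le

lemma chain_supp {M : ℕ → ℕ} {κ : ℕ → ℕ →₀ ℝ} (h1 : ∀ i, ∀ k ∈ (κ i).support, M i ≤ k)
    (h2 : ∀ i, (κ i).support.sup id + 1 ≤ M (i + 1)) :
    ∀ i, ∀ k ∈ (κ i).support, M i ≤ k ∧ k < M (i + 1) := fun i k hk =>
  ⟨h1 i k hk, lt_of_lt_of_le (Nat.lt_succ_of_le (Finset.le_sup (f := id) hk)) (h2 i)⟩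

/-- If the span of `z` contains, arbitrarily far out, vectors with a property `P` that satisfy the
upper estimate of a rapidly increasing sequence up to any given order, then such vectors can be
chosen successively to form a rapidly increasing sequence. -/
lemma exists_RIS {a : ℕ → ℕ} {z : ℕ → ℕ →₀ ℝ} (hz : Block a z) (P : (ℕ →₀ ℝ) → Prop)
    (H : ∀ (p : ℕ) (ε : ℝ), 0 < ε → ∀ N₀ : ℕ, ∃ κ : ℕ →₀ ℝ, (∀ i ∈ κ.support, N₀ ≤ i) ∧
      N (LC z κ) ≤ 1 ∧ P κ ∧
      ∀ f (t : ℕ), W f t → nn t ≤ p → |ev f (LC z κ)| ≤ 2 * (mm t : ℝ)⁻¹ + 2 * ε) :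
    ∃ (M : ℕ → ℕ) (κ : ℕ → ℕ →₀ ℝ), StrictMono M ∧
      (∀ k, ∀ i ∈ (κ k).support, M k ≤ i ∧ i < M (k + 1)) ∧ (∀ k, P (κ k)) ∧
      RIS (a ∘ M) (fun k => LC z (κ k)) := by
  obtain ⟨M, κ, hM, -, hQ, hen⟩ := exists_chain (fun κ : ℕ →₀ ℝ => κ.support.sup id + 1)
    (fun N₀ => H (nn (a N₀ * mm N₀)) ((mm (a N₀ * mm N₀) : ℝ)⁻¹) (inv_pos.2 (mm_pos _)) N₀) 0
  have hs := chain_supp (fun i => (hQ i).1) hen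
  refine ⟨M, κ, hM, hs, fun k => (hQ k).2.2.1, ⟨hz.LC hM hs, fun i => (hQ i).2.1,
    fun i f t hf ht => ?_⟩⟩
  have hle : t ≤ a (M i) * mm (M i) :=
    ht.le.trans (Nat.mul_le_mul_left _ (mm_mono (hM.id_le i)))
  refine ((hQ i).2.2.2 f t hf (nn_mono hle)).trans ?_
  have := inv_mm_anti hle
  linarith

lemma exists_small_mm {δ : ℝ} (hδ : 0 < δ) (c : ℝ) : ∃ j, c * (mm j : ℝ)⁻¹ < δ := by
  obtain ⟨j, hj⟩ := exists_nat_gt (c / δ)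
  refine ⟨j, ?_⟩
  have : (j : ℝ) ≤ mm j := by exact_mod_cast mm_ge_self j
  rw [← div_eq_mul_inv, div_lt_iff₀ (mm_pos j)]
  rw [div_lt_iff₀ hδ] at hj
  nlinarith

/-- The convex hull of a bounded block sequence contains vectors of arbitrarily small norm:
suitable averages form a rapidly increasing sequence, which is averaged once more. -/
lemma exists_small_convex {a : ℕ → ℕ} {z : ℕ → ℕ →₀ ℝ} (hz : Block a z) (hN : ∀ i, N (z i) ≤ 1)
    {δ : ℝ} (hδ : 0 < δ) : ∃ x ∈ convexHull ℝ (Set.range z), N x < δ := by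
  have hconv : ∀ {S : Set (ℕ →₀ ℝ)} {y : ℕ → ℕ →₀ ℝ} {c : ℕ →₀ ℝ}, Convex ℝ S → (∀ i, y i ∈ S) →
      IsProb c → LC y c ∈ S := by
    intro S y c hS hy hc
    rw [LC_eq]
    exact hS.sum_mem (fun i _ => hc.nonneg i) hc.total fun i _ => hy i
  have hcv := convex_convexHull ℝ (Set.range z)
  obtain ⟨M, κ, hM, -, hP, hR⟩ := exists_RIS hz (fun κ => LC z κ ∈ convexHull ℝ (Set.range z)) (by
    intro p ε hε N₀
    obtain ⟨μ, hμ, hμs, -, hsm⟩ := exists_scc hz.mono p ε hε N₀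
    refine ⟨μ, hμs, hμ.N_le hN, hconv hcv (fun i => subset_convexHull ℝ _ ⟨i, rfl⟩) hμ, ?_⟩
    intro f t hf ht
    have := (abs_ev_LC_le hμ.nonneg).trans (upper hz hN hμ hsm hf ht)
    have := inv_pos.2 (mm_pos t)
    linarith)
  obtain ⟨j, hj⟩ := exists_small_mm hδ 5
  obtain ⟨μ, hμ, hμs, -, hsm⟩ := exists_scc hR.mono (nn j) ((mm j : ℝ)⁻¹) (inv_pos.2 (mm_pos j)) j
  exact ⟨_, hconv hcv hP hμ,
    (N_RIS_le hR (fun t ht => nn_mono ht.le) hμ hμs hsm le_rfl).trans_lt hj⟩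

/-- The vector `z` is normed, up to the factor `1 / 4`, by a sum (without any factor `1 / m_j`) of
norming functionals whose positions form a Schreier set of order `r` in `[α, β)` and which satisfy
the growth constraint. -/
def Normed (r α β : ℕ) (z : ℕ →₀ ℝ) : Prop :=
  ∃ (H : Finset ℕ) (f : ℕ → ℕ → ℝ) (w : ℕ → ℕ∞), Sch r H ∧ (∀ q ∈ H, α ≤ q ∧ q < β) ∧
    (∀ q ∈ H, W (f q) (w q)) ∧ (∀ q ∈ H, ∀ i, f q i ≠ 0 → q ≤ i) ∧
    (∀ q ∈ H, ∀ q' ∈ H, q < q' → ∀ i, f q i ≠ 0 → i < q') ∧ (∀ q ∈ H, (q : ℕ∞) ≤ w q) ∧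
    1 / 4 ≤ ∑ q ∈ H, ev (f q) z

/-- A lower `ℓ₁` estimate with constant `4 m_j`, for coefficients supported on sets whose image
under `a` has Schreier order `s`, where `s + r ≤ n_j`. -/
def Low (r : ℕ) (a : ℕ → ℕ) (z : ℕ → ℕ →₀ ℝ) : Prop :=
  ∀ j s, s + r ≤ nn j → ∀ c : ℕ →₀ ℝ, Sch s (c.support.image a) →
    ∑ i ∈ c.support, |c i| ≤ 4 * mm j * N (LC z c)

/-- The families norming the individual blocks are merged into one functional of weight `j`. -/
lemma low_of_normed {r : ℕ} {a : ℕ → ℕ} {z : ℕ → ℕ →₀ ℝ} (hz : Block a z)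
    (h : ∀ i, Normed r (a i) (a (i + 1)) (z i)) : Low r a z := by
  intro j s hs c hc
  choose H f w hH hab hW hlow hsep hw hev using h
  set sg : ℕ → ℝ := fun i => SignType.sign (c i) with hsg
  have hsg1 : ∀ i, |sg i| ≤ 1 := fun i => by
    rcases lt_trichotomy (c i) 0 with h | h | h <;> simp [hsg, h]
  have hsgc : ∀ i, c i * sg i = |c i| := fun i => by
    rw [mul_comm]; exact sign_mul_self (c i)
  set F : Finset (Σ _ : ℕ, ℕ) := c.support.sigma H with hF
  -- the merged family: child `q` of block `i`, restricted to the block and with the sign of `c i`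
  set g : (Σ _ : ℕ, ℕ) → ℕ → ℝ := fun k x =>
    sg k.1 * (if a k.1 ≤ x ∧ x < a (k.1 + 1) then f k.1 k.2 x else 0) with hg
  have hgne : ∀ k x, g k x ≠ 0 → (a k.1 ≤ x ∧ x < a (k.1 + 1)) ∧ f k.1 k.2 x ≠ 0 := by
    intro k x hx
    have h1 := right_ne_zero_of_mul hx
    by_cases hc : a k.1 ≤ x ∧ x < a (k.1 + 1)
    · rw [if_pos hc] at h1; exact ⟨hc, h1⟩
    · rw [if_neg hc] at h1; exact absurd rfl h1
  have hidx : ∀ i i' q x, a i ≤ q → q < a (i + 1) → a i' ≤ x → x < a (i' + 1) → q < x → i ≤ i' := by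
    intro i i' q x h1 h2 h3 h4 h5
    have := hz.mono.lt_iff_lt.1 (lt_of_le_of_lt h1 (h5.trans h4))
    omega
  have hmem : ∀ k ∈ F, k.1 ∈ c.support ∧ k.2 ∈ H k.1 := fun k hk => Finset.mem_sigma.1 hk
  have hWop : W (fun i => (mm j : ℝ)⁻¹ * ∑ k ∈ F, g k i) j := by
    refine W.op' j F (fun k => k.2) ?_ ?_ g (fun k => w k.1 k.2) ?_ ?_ ?_ ?_
    · intro k hk k' hk' hkk
      have h1 := hab _ _ (hmem k hk).2
      have h2 := hab _ _ (hmem k' hk').2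
      dsimp only at hkk
      rw [hkk] at h1
      have := hz.mono.lt_iff_lt.1 (h1.1.trans_lt h2.2)
      have := hz.mono.lt_iff_lt.1 (h2.1.trans_lt h1.2)
      obtain ⟨i, q⟩ := k
      obtain ⟨i', q'⟩ := k'
      obtain rfl : i = i' := by dsimp only at *; omega
      dsimp only at hkk
      rw [hkk]
    · refine (Sch.mono (sch_comp r hz.mono.injective s hc (H := H) (fun k _ => hH k)
        (fun k _ q hq => (hab k q hq).1)) hs).subset ?_
      intro q hq
      obtain ⟨k, hk, rfl⟩ := Finset.mem_image.1 hq
      exact Finset.mem_biUnion.2 ⟨k.1, hmem k hk⟩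
    · intro k hk
      exact ((hW _ _ (hmem k hk).2).restrict (fun x => a k.1 ≤ x ∧ x < a (k.1 + 1))).mul
        (h := fun _ => sg k.1) (fun _ => hsg1 _)
    · intro k hk x hx
      exact hlow _ _ (hmem k hk).2 x (hgne k x hx).2
    · intro k hk k' hk' hlt x hx
      have h1 := hab _ _ (hmem k hk).2
      have h2 := hab _ _ (hmem k' hk').2
      have hx' := hgne k x hx
      have hle : k.1 ≤ k'.1 := hidx _ _ _ _ h1.1 h1.2 h2.1 h2.2 hlt
      rcases hle.eq_or_lt with he | hlt'
      · obtain ⟨i, q⟩ := k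
        obtain ⟨i', q'⟩ := k'
        dsimp only at he
        subst he
        exact hsep _ _ (hmem _ hk).2 _ (hmem _ hk').2 hlt x hx'.2
      · exact hx'.1.2.trans_le ((hz.mono.monotone hlt').trans h2.1)
    · intro k hk
      exact hw _ _ (hmem k hk).2
  have hle := (le_abs_self _).trans (hWop.ev_le (LC z c))
  rw [ev_smul_sum] at hle
  have hgz : ∀ i ∈ c.support, ∀ q ∈ H i, ev (g ⟨i, q⟩) (LC z c) = |c i| * ev (f i q) (z i) := by
    intro i hi q hq
    rw [ev_LC, Finset.sum_eq_single_of_mem i hi]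
    · have : ev (g ⟨i, q⟩) (z i) = sg i * ev (f i q) (z i) := by
        rw [← ev_mul]
        exact ev_congr fun x hx => by simp only [hg]; rw [if_pos (hz.supp i x hx)]
      rw [this, ← hsgc i, mul_assoc]
    · intro i' _ hne
      rw [ev_eq_zero, mul_zero]
      intro x hx
      by_contra hx0
      have h1 := (hgne _ _ hx0).1
      have h2 := hz.supp i' x hx
      dsimp only at h1
      have := hz.mono.lt_iff_lt.1 (h1.1.trans_lt h2.2)
      have := hz.mono.lt_iff_lt.1 (h2.1.trans_lt h1.2)
      omega
  rw [hF, Finset.sum_sigma, ← div_eq_inv_mul, div_le_iff₀ (mm_pos j)] at hle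
  have : (1 / 4) * ∑ i ∈ c.support, |c i| ≤ ∑ i ∈ c.support, ∑ q ∈ H i, ev (g ⟨i, q⟩) (LC z c) := by
    rw [Finset.mul_sum]
    refine Finset.sum_le_sum fun i hi => ?_
    rw [Finset.sum_congr rfl (hgz i hi), ← Finset.mul_sum, mul_comm]
    exact mul_le_mul_of_nonneg_left (hev i) (abs_nonneg _)
  linarith

lemma normed_of_weight {α β : ℕ} (hαβ : α < β) {z : ℕ →₀ ℝ} (hz : ∀ i ∈ z.support, α ≤ i ∧ i < β)
    {f : ℕ → ℝ} {w : ℕ∞} (hf : W f w) (hw : (α : ℕ∞) ≤ w) (hev : 1 / 4 ≤ ev f z) :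
    Normed 0 α β z := by
  refine ⟨{α}, fun _ i => if α ≤ i then f i else 0, fun _ => w, sch_singleton 0 α, ?_, ?_, ?_, ?_,
    ?_, ?_⟩
  · simpa using hαβ
  · intro _ _; exact hf.restrict _
  · intro q hq i hi
    rw [Finset.mem_singleton] at hq
    subst hq
    by_contra hc
    exact hi (if_neg hc)
  · intro q hq q' hq' hlt
    rw [Finset.mem_singleton] at hq hq'
    omega
  · simpa using hw
  · rw [Finset.sum_singleton]
    refine hev.trans_eq (ev_congr fun i hi => ?_)
    simp only [if_pos (hz i hi).1]

/-- Every normalized block sequence has a subsequence with a lower `ℓ₁` estimate. Either the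
norming functionals have unbounded weights, and `r = 0`; or infinitely many share a weight `t`,
and `r = n_t` with the summands of these functionals in their place. -/
lemma exists_low {a : ℕ → ℕ} {z : ℕ → ℕ →₀ ℝ} (hz : Block a z) (hN : ∀ i, N (z i) = 1) :
    ∃ (φ M : ℕ → ℕ) (r : ℕ), StrictMono φ ∧ Block M (z ∘ φ) ∧ Low r M (z ∘ φ) := by
  have hnorm : ∀ k, ∃ f w, W f w ∧ 1 / 2 < ev f (z k) := fun k =>
    exists_norming (by rw [hN k]; norm_num)
  choose f w hf hev using hnorm
  have key : ∀ (r : ℕ) (Q : ℕ → ℕ → Prop), (∀ n, ∃ k, Q n k) → (∀ n k, Q n k → n ≤ a k) →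
      (∀ n k β, Q n k → a (k + 1) ≤ β → Normed r n β (z k)) →
      ∃ (φ M : ℕ → ℕ) (r : ℕ), StrictMono φ ∧ Block M (z ∘ φ) ∧ Low r M (z ∘ φ) := by
    intro r Q hQ hQa hQn
    obtain ⟨M, φ, hM, -, hq, hen⟩ := exists_chain (fun k => a (k + 1)) hQ 0
    have hφ : StrictMono φ := strictMono_nat_of_lt_succ fun i => by
      have := (hen i).trans (hQa _ _ (hq (i + 1)))
      have := hz.mono.le_iff_le.1 this
      omega
    have hb : Block M (z ∘ φ) := ⟨hM, fun k i hi => by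
      have := hz.supp _ i hi
      exact ⟨(hQa _ _ (hq k)).trans this.1, this.2.trans_le (hen k)⟩⟩
    exact ⟨φ, M, r, hφ, hb, low_of_normed hb fun i => hQn _ _ _ (hq i) (hen i)⟩
  by_cases hA : ∀ n : ℕ, ∃ k, n ≤ a k ∧ (n : ℕ∞) ≤ w k
  · refine key 0 (fun n k => n ≤ a k ∧ (n : ℕ∞) ≤ w k) hA (fun n k h => h.1) ?_
    intro n k β h hβ
    refine normed_of_weight (lt_of_lt_of_le (h.1.trans_lt (hz.mono (Nat.lt_succ_self k))) hβ)
      (fun i hi => ?_) (hf k) h.2 (by linarith [hev k])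
    have := hz.supp k i hi
    exact ⟨h.1.trans this.1, this.2.trans_le hβ⟩
  · push Not at hA
    obtain ⟨n₀, hn₀⟩ := hA
    -- infinitely many of the norming functionals have one and the same weight
    obtain ⟨t, ht⟩ : ∃ t : ℕ, ∀ n, ∃ k, n ≤ k ∧ w k = t := by
      by_contra! hcon
      choose b hb using hcon
      set n := n₀ + (Finset.range n₀).sup b
      have h1 : n₀ ≤ a n := le_trans (Nat.le_add_right _ _) (hz.mono.id_le n)
      have h2 := hn₀ n h1
      obtain ⟨t, ht⟩ := ENat.ne_top_iff_exists.1 (ne_top_of_lt h2)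
      rw [← ht] at h2
      have h3 : t < n₀ := by exact_mod_cast h2
      exact hb t n ((Finset.le_sup (f := b) (Finset.mem_range.2 h3)).trans (Nat.le_add_left _ _)) ht.symm
    refine key (nn t) (fun n k => n ≤ k ∧ w k = t) ht
      (fun n k h => h.1.trans (hz.mono.id_le k)) ?_
    rintro n k β ⟨hnk, hwk⟩ hβ
    have hfk := hf k
    have hevk := hev k
    rw [hwk] at hfk
    generalize hw : (t : ℕ∞) = w' at hfk
    generalize f k = F at hfk hevk
    cases hfk with
    | unit i s hs => exact absurd hw (ENat.natCast_ne_top t)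
    | op j G hG g v hg hlow hsep hv =>
      have hj : t = j := by exact_mod_cast hw
      subst hj
      obtain ⟨g', hg', he⟩ := op_decomp (j := t) (α := n) (β := β) hlow hsep (y := z k) (fun i hi => by
        have := hz.supp k i hi
        exact ⟨(hnk.trans (hz.mono.id_le k)).trans this.1, this.2.trans_le hβ⟩)
      refine ⟨G.filter (fun q => n ≤ q ∧ q < β), g, v, hG.subset (Finset.filter_subset _ _),
        fun q hq => (Finset.mem_filter.1 hq).2, fun q hq => hg q (Finset.mem_filter.1 hq).1,
        fun q hq => hlow q (Finset.mem_filter.1 hq).1,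
        fun q hq q' hq' => hsep q (Finset.mem_filter.1 hq).1 q' (Finset.mem_filter.1 hq').1,
        fun q hq => hv q (Finset.mem_filter.1 hq).1, ?_⟩
      have hg1 : ev g' (z k) ≤ 1 := by
        refine (le_abs_self _).trans ?_
        rcases hg' with rfl | ⟨q, hq, -, -, rfl⟩
        · rw [ev_eq_zero (by simp)]; simp
        · exact ((hg q hq).ev_le _).trans (hN k).le
      rw [he, ← div_eq_inv_mul, lt_div_iff₀ (mm_pos t)] at hevk
      have : (24 : ℝ) ≤ mm t := by exact_mod_cast mm_ge t
      linarith

lemma ev_one (c : ℕ →₀ ℝ) : ev (fun _ => 1) c = ∑ i ∈ c.support, c i := by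
  rw [ev_eq _ _ subset_rfl]; simp

/-- Arbitrarily far out, the span of `v` contains normalized vectors that satisfy the upper
estimate of a rapidly increasing sequence up to order `p`. Otherwise special convex combinations
always have norm below `1 / 2`, and normalizing and averaging repeatedly gives vectors of norm at
most one with coefficient sum `2 ^ l`. For `l = m_j` this contradicts the lower estimate with
constant `4 m_j`. -/
lemma exists_ris_vector {a : ℕ → ℕ} {v : ℕ → ℕ →₀ ℝ} (hv : Block a v) (hN : ∀ i, N (v i) = 1)
    {r : ℕ} (hlow : Low r a v) (p : ℕ) (ε : ℝ) (hε : 0 < ε) (N₀ : ℕ) :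
    ∃ κ : ℕ →₀ ℝ, (∀ i ∈ κ.support, N₀ ≤ i) ∧ N (LC v κ) ≤ 1 ∧ N (LC v κ) = 1 ∧
      ∀ f (t : ℕ), W f t → nn t ≤ p → |ev f (LC v κ)| ≤ 2 * (mm t : ℝ)⁻¹ + 2 * ε := by
  by_contra hcon
  have claim : ∀ l n : ℕ, ∃ c : ℕ →₀ ℝ, (∀ i ∈ c.support, n ≤ i) ∧ (∀ i, 0 ≤ c i) ∧
      Sch (l * (p + 1)) (c.support.image a) ∧ 2 ^ l ≤ ev (fun _ => 1) c ∧ N (LC v c) ≤ 1 := by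
    intro l
    induction l with
    | zero =>
      intro n
      refine ⟨Finsupp.single n 1, ?_, ?_, ?_, ?_, ?_⟩
      · simp
      · intro i; simp only [Finsupp.single_apply]; split_ifs <;> norm_num
      · rw [Finsupp.support_single _ one_ne_zero, Finset.image_singleton]
        exact sch_singleton _ _
      · simp [ev_one]
      · simp [hN]
    | succ l ih =>
      intro n
      obtain ⟨M, κ, hM, hM0, hQ, hen⟩ := exists_chain (fun κ : ℕ →₀ ℝ => κ.support.sup id + 1) ih
        (max n N₀)
      have hs := chain_supp (fun i => (hQ i).1) hen
      have hu := hv.LC hM hs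
      obtain ⟨μ, hμ, -, hμS, hsm⟩ := exists_scc hu.mono p ε hε 0
      have hNu : ∀ i, N (LC v (κ i)) ≤ 1 := fun i => (hQ i).2.2.2.2
      have hbig : ∀ i ∈ (LC κ μ).support, n ≤ i ∧ N₀ ≤ i := by
        intro i hi
        obtain ⟨k, -, hik⟩ := LC_supp hi
        have := (hM.monotone (Nat.zero_le k)).trans (hs k i hik).1
        omega
      by_cases hx : 1 / 2 ≤ N (LC v (LC κ μ))
      · exfalso
        apply hcon
        set θ := N (LC v (LC κ μ))
        have hθ : 0 < θ := by linarith
        have hN1 : N (LC v (θ⁻¹ • LC κ μ)) = 1 := by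
          rw [map_smul, N_smul, abs_of_pos (inv_pos.2 hθ), inv_mul_cancel₀ hθ.ne']
        refine ⟨θ⁻¹ • LC κ μ, fun i hi => (hbig i (Finsupp.support_smul hi)).2, hN1.le, hN1, ?_⟩
        intro f t hf ht
        have h1 := (abs_ev_LC_le hμ.nonneg).trans (upper hu hNu hμ hsm hf ht)
        rw [LC_LC] at h1
        rw [map_smul, map_smul, smul_eq_mul, abs_mul, abs_of_pos (inv_pos.2 hθ)]
        have h2 : θ⁻¹ ≤ 2 := by
          rw [inv_le_comm₀ hθ (by norm_num)]; linarith
        have := mul_le_mul h2 h1 (abs_nonneg _) (by norm_num)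
        linarith
      · push Not at hx
        refine ⟨(2 : ℝ) • LC κ μ, fun i hi => (hbig i (Finsupp.support_smul hi)).1, ?_, ?_, ?_, ?_⟩
        · intro i
          simp only [LC_eq, Finsupp.smul_apply, Finsupp.finsetSum_apply, smul_eq_mul]
          exact mul_nonneg (by norm_num) (Finset.sum_nonneg fun k _ =>
            mul_nonneg (hμ.nonneg k) ((hQ k).2.1 i))
        · have := sch_comp (l * (p + 1)) hu.mono.injective (p + 1) hμS
            (H := fun k => (κ k).support.image a) (fun k _ => (hQ k).2.2.1) (by
              intro k _ q hq
              obtain ⟨i, hi, rfl⟩ := Finset.mem_image.1 hq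
              exact hv.mono.monotone (hs k i hi).1)
          rw [show (l + 1) * (p + 1) = p + 1 + l * (p + 1) by ring]
          refine this.subset fun q hq => ?_
          obtain ⟨i, hi, rfl⟩ := Finset.mem_image.1 hq
          obtain ⟨k, hk, hik⟩ := LC_supp (Finsupp.support_smul hi)
          exact Finset.mem_biUnion.2 ⟨k, hk, Finset.mem_image_of_mem _ hik⟩
        · rw [map_smul, ev_LC, smul_eq_mul, pow_succ, mul_comm]
          refine mul_le_mul_of_nonneg_left ?_ (by norm_num)
          calc (2 : ℝ) ^ l = ∑ i ∈ μ.support, μ i * 2 ^ l := by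
                rw [← Finset.sum_mul, hμ.total, one_mul]
            _ ≤ _ := Finset.sum_le_sum fun k _ =>
                mul_le_mul_of_nonneg_left (hQ k).2.2.2.1 (hμ.nonneg k)
        · rw [map_smul, N_smul, abs_of_pos (by norm_num)]
          linarith
  set j := p + 1 + r with hj
  obtain ⟨c, -, hc0, hcS, hc1, hcN⟩ := claim (mm j) 0
  have h := hlow j (mm j * (p + 1)) (by
    have := mm_ge j
    rw [nn, hj]; nlinarith) c hcS
  rw [Finset.sum_congr rfl fun i _ => abs_of_nonneg (hc0 i), ← ev_one] at h
  have h2 : (2 : ℝ) ^ mm j ≤ 4 * mm j := by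
    have : (0 : ℝ) ≤ 4 * mm j := by positivity
    nlinarith
  have h3 : ∀ n : ℕ, 5 ≤ n → 4 * n < 2 ^ n := by
    intro n hn
    induction n, hn using Nat.le_induction with
    | base => norm_num
    | succ n hn ih => rw [pow_succ]; omega
  have h4 := h3 (mm j) (by have := mm_ge j; omega)
  have h5 : (2 : ℝ) ^ mm j ≤ ((4 * mm j : ℕ) : ℝ) := by push_cast; exact h2
  have : 2 ^ mm j ≤ 4 * mm j := by exact_mod_cast h5
  omega

/-- Normalized special convex combinations of order `n_j` of a rapidly increasing sequence.
Normalization costs a factor of at most `4 m_j`, and their averages are, up to that, at most `5 /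
m_(j+1)`. -/
lemma exists_bad {a : ℕ → ℕ} {v : ℕ → ℕ →₀ ℝ} (hv : Block a v) (hN : ∀ i, N (v i) = 1)
    {r : ℕ} (hlow : Low r a v) {j : ℕ} (hj : 1 ≤ j) :
    ∃ (M : ℕ → ℕ) (ξ : ℕ → ℕ →₀ ℝ), StrictMono M ∧
      (∀ k, ∀ i ∈ (ξ k).support, M k ≤ i ∧ i < M (k + 1)) ∧ (∀ k, N (LC v (ξ k)) = 1) ∧
      ∀ A : Finset ℕ, A.card = 2 * mm (j + 1) → (∀ k ∈ A, j + 1 ≤ k) →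
        N ((A.card : ℝ)⁻¹ • ∑ k ∈ A, LC v (ξ k)) ≤ 20 / (j + 5) := by
  obtain ⟨M₁, κ, hM₁, hκ, hκN, hR⟩ := exists_RIS hv (fun κ => N (LC v κ) = 1)
    (exists_ris_vector hv hN hlow)
  set b := a ∘ M₁ with hb
  set y : ℕ → ℕ →₀ ℝ := fun k => LC v (κ k) with hy
  have hylow : Low 0 b y := low_of_normed hR.toBlock fun i => by
    obtain ⟨f, w, hf, hev⟩ := exists_norming (x := y i) (c := 1 / 2) (by rw [hy]; dsimp only; rw [hκN i]; norm_num)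
    refine normed_of_weight (hR.mono (Nat.lt_succ_self i)) (hR.supp i) hf ?_ (by linarith)
    by_contra! hlt
    obtain ⟨t, ht⟩ := ENat.ne_top_iff_exists.1 (ne_top_of_lt hlt)
    rw [← ht] at hf hlt
    have hlt' : t < b i := by exact_mod_cast hlt
    have h24 := mm_ge i
    have h1 := hR.est i f t hf (lt_of_lt_of_le hlt' (Nat.le_mul_of_pos_right _ (by omega)))
    have h2 : (mm t : ℝ)⁻¹ ≤ 1 / 24 := by
      rw [one_div]
      exact inv_anti₀ (by norm_num) (by exact_mod_cast mm_ge t)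
    have := le_abs_self (ev f (y i))
    linarith
  set K : ℕ := 2 * mm (j + 1) with hK
  have hmp := mm_pos (j + 1)
  have hKpos : (0 : ℝ) < K := by rw [hK]; push_cast; linarith
  have hnn : nn j - 1 + 1 = nn j := by
    have : 1 ≤ nn j := by
      have := mm_ge j
      rw [nn]; nlinarith
    omega
  obtain ⟨M₂, c, hM₂, -, hQ, hen⟩ := exists_chain (fun κ : ℕ →₀ ℝ => κ.support.sup id + 1)
    (fun n => exists_scc hR.mono (nn j - 1) (((b n : ℝ) + 1)⁻¹ * (K : ℝ)⁻¹) (by positivity) n) 0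
  have hcs := chain_supp (fun i => (hQ i).2.1) hen
  have hθ : ∀ k, (N (LC y (c k)))⁻¹ ≤ 4 * mm j ∧ 0 < N (LC y (c k)) := by
    intro k
    have hS := (hQ k).2.2.1
    rw [hnn] at hS
    have h1 := hylow j (nn j) le_rfl (c k) hS
    rw [Finset.sum_congr rfl fun i _ => abs_of_nonneg ((hQ k).1.nonneg i), (hQ k).1.total] at h1
    have hm := mm_pos j
    have h0 : 0 < N (LC y (c k)) := by
      by_contra! hc
      nlinarith
    refine ⟨?_, h0⟩
    rw [inv_le_iff_one_le_mul₀ h0]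
    exact h1
  refine ⟨M₁ ∘ M₂, fun k => (N (LC y (c k)))⁻¹ • LC κ (c k), hM₁.comp hM₂, ?_, ?_, ?_⟩
  · intro k i hi
    obtain ⟨l, hl, hil⟩ := LC_supp (Finsupp.support_smul hi)
    have h1 := hκ l i hil
    have h2 := hcs k l hl
    exact ⟨(hM₁.monotone h2.1).trans h1.1, h1.2.trans_le (hM₁.monotone h2.2)⟩
  · intro k
    rw [map_smul, ← LC_LC, N_smul, abs_of_pos (inv_pos.2 (hθ k).2), inv_mul_cancel₀ (hθ k).2.ne']
  · intro A hA hAj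
    have hAne : A.Nonempty := Finset.card_pos.1 (by have := mm_ge (j + 1); omega)
    have hsm := small_avg hR.mono hAne hM₂ (μ := c) (s := nn j - 1) (fun k _ => (hQ k).1)
      (fun k _ => hcs k) (fun k _ => by rw [hA]; exact (hQ k).2.2.2)
    rw [hnn, hA] at hsm
    have hprob := isProb_avg hAne (μ := c) (fun k _ => (hQ k).1)
    rw [hA] at hprob
    refine N_le fun f w hf => ?_
    have hmain := main_est hR (j := j + 1) (s := nn j) (fun t ht => nn_mono (by omega)) hprob
      (by
        intro i hi
        obtain ⟨k, hk, hik⟩ := avg_supp hi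
        have := (hcs k i hik).1
        have h2 : k ≤ M₂ k := hM₂.id_le k
        have := hAj k hk
        omega) hsm (by rw [hK]; push_cast; rw [mul_inv]; linarith [inv_pos.2 hmp]) hf
    rw [← ev_eq (fun i => |ev f (y i)|) _ subset_rfl, map_smul, map_sum, smul_eq_mul] at hmain
    rw [map_smul, map_sum, smul_eq_mul, hA, abs_mul, abs_of_pos (inv_pos.2 hKpos)]
    have hterm : ∀ k ∈ A, |ev f (LC v ((N (LC y (c k)))⁻¹ • LC κ (c k)))| ≤
        4 * mm j * ev (fun i => |ev f (y i)|) (c k) := by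
      intro k _
      rw [map_smul, ← LC_LC, map_smul, smul_eq_mul, abs_mul, abs_of_pos (inv_pos.2 (hθ k).2),
        ev_eq (fun i => |ev f (y i)|) _ subset_rfl]
      exact mul_le_mul (hθ k).1 (abs_ev_LC_le (hQ k).1.nonneg) (abs_nonneg _) (by positivity)
    have h1 := (Finset.abs_sum_le_sum_abs _ _).trans (Finset.sum_le_sum hterm)
    rw [← Finset.mul_sum] at h1
    have h2 := mul_le_mul_of_nonneg_left h1 (inv_pos.2 hKpos).le
    have h3 := mul_le_mul_of_nonneg_left hmain (show (0 : ℝ) ≤ 4 * mm j by positivity)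
    have h4 : 4 * (mm j : ℝ) * (5 * (mm (j + 1) : ℝ)⁻¹) = 20 / (j + 5) := by
      have := mm_pos j
      rw [mm_succ]; push_cast
      field_simp
      norm_num
    rw [← h4]
    calc _ ≤ _ := h2
      _ = 4 * mm j * ((K : ℝ)⁻¹ * ∑ i ∈ A, ev (fun i => |ev f (y i)|) (c i)) := by ring
      _ ≤ _ := h3

/-! ### Existence of spreading models -/

section SM

variable {X : Type*} [NormedAddCommGroup X] [NormedSpace ℝ X]

lemma tendsto_limUnder_of_bdd (U : Ultrafilter ℕ) {f : ℕ → ℝ} {C : ℝ} (h : ∀ n, |f n| ≤ C) :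
    Tendsto f U (𝓝 (limUnder (U : Filter ℕ) f)) := by
  have hle : ((U.map f : Ultrafilter ℝ) : Filter ℝ) ≤ 𝓟 (Set.Icc (-C) C) := by
    rw [Ultrafilter.coe_map]
    exact tendsto_principal.2 (Eventually.of_forall fun n => abs_le.1 (h n))
  obtain ⟨l, -, hl⟩ := isCompact_Icc.ultrafilter_le_nhds _ hle
  exact tendsto_nhds_limUnder ⟨l, hl⟩

/-- The iterated limit of `‖v + ∑ a i • x (n i)‖` along the hyperfilter. For bounded `x` all the
limits exist, so that `limUnder` takes no junk value. -/
def iterLim (x : ℕ → X) : ∀ m : ℕ, (Fin m → ℝ) → X → ℝ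
  | 0, _, v => ‖v‖
  | m + 1, a, v => limUnder (hyperfilter ℕ : Filter ℕ) fun n => iterLim x m (Fin.tail a) (v + a 0 • x n)

variable {x : ℕ → X}

lemma iterLim_bdd (hx : ∀ i, ‖x i‖ ≤ 1) : ∀ (m : ℕ) (a : Fin m → ℝ) (v : X), |iterLim x m a v| ≤ ‖v‖ + ∑ i, |a i|
  | 0, _, v => by simp [iterLim]
  | m + 1, a, v => by
    have hb : ∀ n, |iterLim x m (Fin.tail a) (v + a 0 • x n)| ≤ ‖v‖ + ∑ i, |a i| := fun n => by
      refine (iterLim_bdd hx m _ _).trans ?_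
      rw [Fin.sum_univ_succ]
      have h1 := norm_add_le v (a 0 • x n)
      rw [norm_smul, Real.norm_eq_abs] at h1
      have h2 := mul_le_of_le_one_right (abs_nonneg (a 0)) (hx n)
      simp only [Fin.tail]
      linarith
    exact le_of_tendsto (tendsto_limUnder_of_bdd (hyperfilter ℕ) hb).abs (Eventually.of_forall hb)

lemma iterLim_tendsto (hx : ∀ i, ‖x i‖ ≤ 1) (m : ℕ) (a : Fin (m + 1) → ℝ) (v : X) :
    Tendsto (fun n => iterLim x m (Fin.tail a) (v + a 0 • x n)) (hyperfilter ℕ)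
      (𝓝 (iterLim x (m + 1) a v)) := by
  refine tendsto_limUnder_of_bdd (hyperfilter ℕ) (C := ‖v‖ + ∑ i, |a i|) fun n => ?_
  refine (iterLim_bdd hx m _ _).trans ?_
  rw [Fin.sum_univ_succ]
  have h1 := norm_add_le v (a 0 • x n)
  rw [norm_smul, Real.norm_eq_abs] at h1
  have h2 := mul_le_of_le_one_right (abs_nonneg (a 0)) (hx n)
  simp only [Fin.tail]
  linarith

lemma iterLim_lip (hx : ∀ i, ‖x i‖ ≤ 1) : ∀ (m : ℕ) (a b : Fin m → ℝ) (v w : X),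
    |iterLim x m a v - iterLim x m b w| ≤ ‖v - w‖ + ∑ i, |a i - b i|
  | 0, _, _, v, w => by simpa [iterLim] using abs_norm_sub_norm_le v w
  | m + 1, a, b, v, w => by
    refine le_of_tendsto ((iterLim_tendsto hx m a v).sub (iterLim_tendsto hx m b w)).abs
      (Eventually.of_forall fun n => ?_)
    refine (iterLim_lip hx m _ _ _ _).trans ?_
    rw [Fin.sum_univ_succ]
    have h1 : ‖v + a 0 • x n - (w + b 0 • x n)‖ ≤ ‖v - w‖ + |a 0 - b 0| := by
      rw [show v + a 0 • x n - (w + b 0 • x n) = (v - w) + (a 0 - b 0) • x n by module]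
      refine (norm_add_le _ _).trans ?_
      rw [norm_smul, Real.norm_eq_abs]
      have := mul_le_of_le_one_right (abs_nonneg (a 0 - b 0)) (hx n)
      linarith
    simp only [Fin.tail]
    linarith

/-- Combinations of `x 0, …, x (n - 1)` in which a nonzero coefficient of `x k` is taken among `d
0, …, d k`. -/
def prevVecs (d : ℕ → ℝ) (x : ℕ → X) : ℕ → Set X
  | 0 => {0}
  | n + 1 => prevVecs d x n ∪
      (fun p : X × ℕ => p.1 + d p.2 • x n) '' (prevVecs d x n ×ˢ Set.Iic n)

lemma prevVecs_finite (d : ℕ → ℝ) (x : ℕ → X) : ∀ n, (prevVecs d x n).Finite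
  | 0 => Set.finite_singleton _
  | n + 1 => (prevVecs_finite d x n).union
      (((prevVecs_finite d x n).prod (Set.finite_Iic n)).image _)

lemma prevVecs_mono (d : ℕ → ℝ) (x : ℕ → X) : Monotone (prevVecs d x) :=
  monotone_nat_of_le_succ fun _ => Set.subset_union_left

/-- The theorem of Brunel and Sucheston: every sequence in the unit ball has a subsequence
generating a spreading model, which is given by `iterLim`. -/
theorem exists_spreading_model (hx : ∀ i, ‖x i‖ ≤ 1) :
    ∃ φ : ℕ → ℕ, StrictMono φ ∧ ∃ ν, GeneratesSpreadingModel (x ∘ φ) ν := by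
  obtain ⟨d, hd⟩ := TopologicalSpace.exists_dense_seq ℝ
  obtain ⟨code, hcode⟩ := Countable.exists_injective_nat (Σ m : ℕ, (Fin (m + 1) → ℕ))
  set tasks : ℕ → Set (Σ m : ℕ, (Fin (m + 1) → ℕ)) := fun n => {τ | code τ ≤ n} with htasks
  have htf : ∀ n, (tasks n).Finite := fun n =>
    Set.Finite.preimage hcode.injOn (Set.finite_Iic n)
  set Q : ℕ → ℕ → Prop := fun n k => n ≤ k ∧ ∀ τ ∈ tasks n, ∀ v ∈ prevVecs d x n,
    |iterLim x τ.1 (Fin.tail (d ∘ τ.2)) (v + d (τ.2 0) • x k) - iterLim x (τ.1 + 1) (d ∘ τ.2) v| <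
      1 / ((n : ℝ) + 1) with hQdef
  have hQ : ∀ n, ∃ k, Q n k := by
    intro n
    have h1 : ∀ᶠ k in (hyperfilter ℕ : Filter ℕ), n ≤ k :=
      (Nat.hyperfilter_le_atTop) (eventually_ge_atTop n)
    have h2 : ∀ᶠ k in (hyperfilter ℕ : Filter ℕ), ∀ τ ∈ tasks n, ∀ v ∈ prevVecs d x n,
        |iterLim x τ.1 (Fin.tail (d ∘ τ.2)) (v + d (τ.2 0) • x k) -
          iterLim x (τ.1 + 1) (d ∘ τ.2) v| < 1 / ((n : ℝ) + 1) := by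
      refine ((htf n).eventually_all).2 fun τ _ => ((prevVecs_finite d x n).eventually_all).2
        fun v _ => ?_
      have := iterLim_tendsto hx τ.1 (d ∘ τ.2) v
      exact (Metric.tendsto_nhds.1 this) _ (by positivity)
    exact (h1.and h2).exists
  obtain ⟨M, φ, hM, -, hq, hen⟩ := exists_chain (fun k => k + 1) hQ 0
  have hφ : StrictMono φ := strictMono_nat_of_lt_succ fun i => by
    have := hen i
    have := (hq (i + 1)).1
    omega
  refine ⟨φ, hφ, fun m a => iterLim x m a 0, ?_⟩
  have claim : ∀ (m : ℕ) (a : Fin m → ℕ), ∃ N₀ : ℕ, ∀ n₀ ≥ N₀, ∀ j : Fin m → ℕ, StrictMono j →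
      (∀ i, n₀ ≤ j i) → ∀ n, ∀ v ∈ prevVecs d x n, (∀ i, n ≤ M (j i)) →
      |‖v + ∑ i, d (a i) • x (φ (j i))‖ - iterLim x m (d ∘ a) v| ≤ m / ((n₀ : ℝ) + 1) := by
    intro m
    induction m with
    | zero => intro a; exact ⟨0, fun n₀ _ j _ _ n v _ _ => by simp [iterLim]⟩
    | succ m ih =>
      intro a
      obtain ⟨N₁, hN₁⟩ := ih (Fin.tail a)
      refine ⟨max N₁ (max (code ⟨m, a⟩) (a 0)), fun n₀ hn₀ j hj hjn n v hv hnj => ?_⟩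
      have hle1 : N₁ ≤ n₀ := by omega
      have hle2 : code ⟨m, a⟩ ≤ n₀ := by omega
      have hle3 : a 0 ≤ n₀ := by omega
      have hjM : j 0 ≤ M (j 0) := hM.id_le _
      have hqj := hq (j 0)
      have h0 := hqj.2 ⟨m, a⟩ (hle2.trans ((hjn 0).trans hjM)) v (prevVecs_mono d x (hnj 0) hv)
      dsimp only at h0
      have hv' : v + d (a 0) • x (φ (j 0)) ∈ prevVecs d x (φ (j 0) + 1) :=
        Or.inr ⟨(v, a 0), ⟨prevVecs_mono d x ((hnj 0).trans hqj.1) hv,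
          hle3.trans ((hjn 0).trans (hjM.trans hqj.1))⟩, rfl⟩
      have h1 := hN₁ n₀ hle1 (Fin.tail j) (fun i i' h => hj (Fin.succ_lt_succ_iff.2 h))
        (fun i => hjn _) _ _ hv' (fun i => (hen (j 0)).trans
          (hM.monotone (hj (Fin.succ_pos i))))
      rw [Fin.sum_univ_succ, ← add_assoc]
      have h2 : 1 / ((M (j 0) : ℝ) + 1) ≤ 1 / ((n₀ : ℝ) + 1) := by
        have : (n₀ : ℝ) ≤ M (j 0) := by exact_mod_cast (hjn 0).trans hjM
        exact one_div_le_one_div_of_le (by positivity) (by linarith)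
      have h3 : (((m + 1 : ℕ) : ℝ)) / ((n₀ : ℝ) + 1) = m / ((n₀ : ℝ) + 1) + 1 / ((n₀ : ℝ) + 1) := by
        push_cast; ring
      rw [h3]
      refine (abs_sub_le _ (iterLim x m (d ∘ Fin.tail a) (v + d (a 0) • x (φ (j 0)))) _).trans ?_
      exact add_le_add h1 (h0.le.trans h2)
  intro m a ε hε
  have hη : 0 < ε / (4 * ((m : ℝ) + 1)) := by positivity
  have happ : ∀ i, ∃ k, |a i - d k| < ε / (4 * ((m : ℝ) + 1)) := fun i => by
    obtain ⟨k, hk⟩ := hd.exists_dist_lt (a i) hη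
    exact ⟨k, hk⟩
  choose b hb using happ
  obtain ⟨N₀, hN₀⟩ := claim m b
  obtain ⟨N₁, hN₁⟩ := exists_nat_gt (4 * (m : ℝ) / ε)
  refine ⟨max N₀ N₁, fun j hj hjN => ?_⟩
  have h1 := hN₀ (max N₀ N₁) (le_max_left _ _) j hj hjN 0 0 rfl (fun _ => Nat.zero_le _)
  have hsum : ∑ i, |a i - d (b i)| ≤ ε / 4 := by
    refine (Finset.sum_le_card_nsmul _ _ (ε / (4 * ((m : ℝ) + 1))) fun i _ => (hb i).le).trans ?_
    rw [Finset.card_univ, Fintype.card_fin, nsmul_eq_mul, ← mul_div_assoc,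
      div_le_div_iff₀ (by positivity) (by norm_num)]
    nlinarith
  have h2 : (m : ℝ) / (((max N₀ N₁ : ℕ) : ℝ) + 1) ≤ ε / 4 := by
    have : (N₁ : ℝ) ≤ ((max N₀ N₁ : ℕ) : ℝ) := by exact_mod_cast le_max_right _ _
    rw [div_lt_iff₀ hε] at hN₁
    rw [div_le_div_iff₀ (by positivity) (by norm_num)]
    nlinarith
  have h3 := iterLim_lip hx m (d ∘ b) a 0 0
  have h4 : |‖∑ i, a i • (x ∘ φ) (j i)‖ - ‖(0 : X) + ∑ i, d (b i) • x (φ (j i))‖| ≤ ε / 4 := by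
    refine (abs_norm_sub_norm_le _ _).trans (le_trans ?_ hsum)
    rw [zero_add, ← Finset.sum_sub_distrib]
    refine (norm_sum_le _ _).trans (Finset.sum_le_sum fun i _ => ?_)
    rw [Function.comp_apply, ← sub_smul, norm_smul, Real.norm_eq_abs]
    exact mul_le_of_le_one_right (abs_nonneg _) (hx _)
  have h5 : |iterLim x m (d ∘ b) 0 - iterLim x m a 0| ≤ ε / 4 := by
    refine h3.trans ?_
    rw [sub_zero, norm_zero, zero_add]
    refine le_trans (Finset.sum_le_sum fun i _ => ?_) hsum
    rw [abs_sub_comm]; rfl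
  rw [abs_le] at h1 h4 h5
  rw [abs_lt]
  constructor <;> linarith [h1.1, h1.2, h4.1, h4.2, h5.1, h5.2]

end SM

/-! ### The Banach space and its basis -/

/-- The space `c₀₀` of finitely supported sequences, carrying the norm `N`. -/
def V : Type := ℕ →₀ ℝ

instance : AddCommGroup V := inferInstanceAs (AddCommGroup (ℕ →₀ ℝ))
instance : Module ℝ V := inferInstanceAs (Module ℝ (ℕ →₀ ℝ))
instance : Norm V := ⟨N⟩

lemma V_core : NormedSpace.Core ℝ V where
  norm_nonneg x := N_nonneg x
  norm_smul c x := N_smul c x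
  norm_triangle x y := N_add_le x y
  norm_eq_zero_iff x := ⟨fun h => by
    by_contra hx
    exact (N_pos hx).ne' h, fun h => by rw [h]; exact N_zero⟩

instance : NormedAddCommGroup V := NormedAddCommGroup.ofCore V_core
instance : NormedSpace ℝ V := NormedSpace.ofCore V_core

/-- The completion of `c₀₀` under `N`. -/
def X : Type := UniformSpace.Completion V

instance : NormedAddCommGroup X := inferInstanceAs (NormedAddCommGroup (UniformSpace.Completion V))
instance : NormedSpace ℝ X := inferInstanceAs (NormedSpace ℝ (UniformSpace.Completion V))
instance : CompleteSpace X := inferInstanceAs (CompleteSpace (UniformSpace.Completion V))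

/-- The inclusion of `c₀₀` in its completion. -/
def incl : (ℕ →₀ ℝ) →ₗ[ℝ] X :=
  (UniformSpace.Completion.toComplₗᵢ (𝕜 := ℝ) (E := V)).toLinearMap

lemma norm_incl (x : ℕ →₀ ℝ) : ‖incl x‖ = N x :=
  (UniformSpace.Completion.toComplₗᵢ (𝕜 := ℝ) (E := V)).norm_map x

lemma dense_incl : DenseRange incl := UniformSpace.Completion.denseRange_coe (α := V)

attribute [irreducible] X incl

/-- The coordinate functionals. -/
def coord (i : ℕ) : X →L[ℝ] ℝ := (Finsupp.lapply i : (ℕ →₀ ℝ) →ₗ[ℝ] ℝ).extendOfNorm incl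

lemma coord_incl (i : ℕ) (x : ℕ →₀ ℝ) : coord i (incl x) = x i :=
  LinearMap.extendOfNorm_eq dense_incl
    ⟨1, fun x => by rw [norm_incl, one_mul]; exact abs_apply_le x i⟩ x

/-- The first `n` coordinates of a vector, as an element of `c₀₀`. -/
def cut (n : ℕ) : X →ₗ[ℝ] (ℕ →₀ ℝ) :=
  ∑ i ∈ Finset.range n, Finsupp.lsingle i ∘ₗ (coord i).toLinearMap

lemma cut_apply (n : ℕ) (x : X) (i : ℕ) : cut n x i = if i < n then coord i x else 0 := by
  simp [cut, Finsupp.finsetSum_apply, Finsupp.single_apply]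

/-- The basis. -/
def bas (i : ℕ) : X := incl (Finsupp.single i 1)

/-- The basis projections. -/
def pr (n : ℕ) : X →L[ℝ] X := ∑ i ∈ Finset.range n, (coord i).smulRight (bas i)

lemma pr_eq_sum (n : ℕ) (x : X) : pr n x = ∑ i ∈ Finset.range n, coord i x • bas i := by
  simp [pr]

lemma pr_apply (n : ℕ) (x : X) : pr n x = incl (cut n x) := by
  rw [pr_eq_sum, cut, LinearMap.sum_apply, map_sum]
  refine Finset.sum_congr rfl fun i _ => ?_
  rw [bas, ← map_smul, Finsupp.smul_single, smul_eq_mul, mul_one]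
  rfl

lemma norm_pr_le (n : ℕ) (x : X) : ‖pr n x‖ ≤ ‖x‖ := by
  refine dense_incl.induction_on x (isClosed_le (by fun_prop) (by fun_prop)) fun v => ?_
  rw [pr_apply, norm_incl, norm_incl]
  refine N_mono fun i => ?_
  rw [cut_apply, coord_incl]
  split_ifs
  · exact le_rfl
  · simp

lemma pr_incl {n : ℕ} {v : ℕ →₀ ℝ} (h : ∀ i ∈ v.support, i < n) : pr n (incl v) = incl v := by
  rw [pr_apply]
  congr 1
  ext i
  rw [cut_apply, coord_incl]
  split_ifs with hi
  · rfl
  · by_contra hne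
    exact hi (h i (Finsupp.mem_support_iff.2 (Ne.symm hne)))

lemma tendsto_pr (x : X) : Tendsto (fun n => pr n x) atTop (𝓝 x) := by
  rw [Metric.tendsto_atTop]
  intro ε hε
  obtain ⟨v, hv⟩ := dense_incl.exists_dist_lt x (half_pos hε)
  refine ⟨v.support.sup id + 1, fun n hn => ?_⟩
  have h1 : pr n (incl v) = incl v := pr_incl fun i hi =>
    lt_of_lt_of_le (Nat.lt_succ_of_le (Finset.le_sup (f := id) hi)) hn
  have h2 : pr n x - x = pr n (x - incl v) - (x - incl v) := by
    rw [map_sub, h1]; abel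
  rw [dist_eq_norm, h2]
  have h3 := norm_pr_le n (x - incl v)
  rw [dist_eq_norm] at hv
  linarith [norm_sub_le (pr n (x - incl v)) (x - incl v)]

lemma coord_bas (i j : ℕ) : coord i (bas j) = if j = i then 1 else 0 := by
  rw [bas, coord_incl, Finsupp.single_apply]

lemma isSchauderBasis_bas : IsSchauderBasis bas := by
  intro x
  refine ⟨fun i => coord i x, ?_, fun a ha => ?_⟩
  · simpa only [pr_eq_sum] using tendsto_pr x
  · funext i
    have h1 := ((coord i).continuous.tendsto x).comp ha
    refine tendsto_nhds_unique ?_ h1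
    refine tendsto_const_nhds.congr' ?_
    filter_upwards [eventually_gt_atTop i] with n hn
    simp [coord_bas, hn]

lemma sum_bas (F : Finset ℕ) (a : ℕ → ℝ) :
    ∑ i ∈ F, a i • bas i = incl (∑ i ∈ F, Finsupp.single i (a i)) := by
  rw [map_sum]
  refine Finset.sum_congr rfl fun i _ => ?_
  rw [bas, ← map_smul, Finsupp.smul_single, smul_eq_mul, mul_one]

lemma oneUnconditional_bas : OneUnconditional bas := by
  intro F a ε hε
  have key : ∀ i, |(∑ i ∈ F, Finsupp.single i (ε i * a i) : ℕ →₀ ℝ) i|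
      = |(∑ i ∈ F, Finsupp.single i (a i) : ℕ →₀ ℝ) i| := fun i => by
    simp only [Finsupp.finsetSum_apply, Finsupp.single_apply, Finset.sum_ite_eq']
    rcases hε i with h | h <;> split_ifs <;> simp [h]
  rw [sum_bas F (fun i => ε i * a i), sum_bas, norm_incl, norm_incl]
  exact le_antisymm (N_mono fun i => (key i).le) (N_mono fun i => (key i).ge)

/-! ### Reflexivity -/

/-- A unit vector that almost vanishes on the first `n` coordinates is close to a normalized
finitely supported vector beyond `n`. -/
lemma exists_block_near {u : X} {n : ℕ} {ε : ℝ} (hε : 0 < ε) (hε1 : ε ≤ 1 / 4) (hu : ‖u‖ = 1)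
    (hn : ‖pr n u‖ ≤ ε) : ∃ (m : ℕ) (z : ℕ →₀ ℝ), (∀ i ∈ z.support, n ≤ i ∧ i < m) ∧ N z = 1 ∧
      ‖u - incl z‖ ≤ 4 * ε := by
  obtain ⟨m, hm, hnm⟩ := ((Metric.tendsto_nhds.1 (tendsto_pr u) ε hε).and
    (eventually_ge_atTop n)).exists
  rw [dist_eq_norm] at hm
  set w := cut m u - cut n u with hw
  have hwX : incl w = pr m u - pr n u := by rw [hw, map_sub, pr_apply, pr_apply]
  have h1 : ‖u - incl w‖ ≤ 2 * ε := by
    have : u - incl w = pr n u - (pr m u - u) := by rw [hwX]; abel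
    rw [this]
    linarith [norm_sub_le (pr n u) (pr m u - u)]
  have h2 : |1 - N w| ≤ 2 * ε := by
    have := abs_norm_sub_norm_le u (incl w)
    rw [hu, norm_incl] at this
    exact this.trans h1
  have h3 : 0 < N w := by linarith [(abs_le.1 h2).2]
  refine ⟨m, (N w)⁻¹ • w, fun i hi => ?_, ?_, ?_⟩
  · have hi' : w i ≠ 0 := fun h => by simp [h] at hi
    rw [hw, Finsupp.sub_apply, cut_apply, cut_apply] at hi'
    by_contra hc
    apply hi'
    split_ifs <;> first | omega | simp
  · rw [N_smul, abs_of_pos (inv_pos.2 h3), inv_mul_cancel₀ h3.ne']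
  · have h4 : ‖incl w - incl ((N w)⁻¹ • w)‖ = |1 - N w| := by
      have : w - (N w)⁻¹ • w = (1 - (N w)⁻¹) • w := by rw [sub_smul, one_smul]
      rw [← map_sub, norm_incl, this, N_smul]
      nth_rewrite 2 [← abs_of_pos h3]
      rw [← abs_mul, sub_mul, inv_mul_cancel₀ h3.ne', one_mul, abs_sub_comm]
    have h5 : u - incl ((N w)⁻¹ • w) = (u - incl w) + (incl w - incl ((N w)⁻¹ • w)) := by abel
    rw [h5]
    linarith [norm_add_le (u - incl w) (incl w - incl ((N w)⁻¹ • w))]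

/-- A gliding hump argument: if there are unit vectors `U t`, with `en t` arbitrarily large and
arbitrarily small initial parts, then some of them are summably close to a normalized block
sequence. -/
lemma exists_glide {α : Type*} (U : α → X) (en : α → ℕ)
    (h : ∀ n, ∀ ε > 0, ∃ t, n ≤ en t ∧ ‖U t‖ = 1 ∧ ‖pr n (U t)‖ ≤ ε) {η : ℝ} (hη : 0 < η)
    (hη1 : η ≤ 1) :
    ∃ (a : ℕ → ℕ) (z : ℕ → ℕ →₀ ℝ) (t : ℕ → α), Block a z ∧ (∀ k, N (z k) = 1) ∧
      (∀ k, ‖U (t k) - incl (z k)‖ ≤ η * (1 / 2) ^ k) ∧ StrictMono (en ∘ t) := by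
  have h' : ∀ n, ∃ p : α × ℕ × (ℕ →₀ ℝ), n ≤ en p.1 ∧
      (∀ i ∈ p.2.2.support, n ≤ i ∧ i < p.2.1) ∧ N p.2.2 = 1 ∧
      ‖U p.1 - incl p.2.2‖ ≤ η * (1 / 2) ^ n := fun n => by
    have hpos : 0 < η * (1 / 2) ^ n / 4 := by positivity
    have hle : η * (1 / 2) ^ n ≤ 1 := mul_le_one₀ hη1 (by positivity)
      (pow_le_one₀ (by norm_num) (by norm_num))
    obtain ⟨t, ht, ht1, ht2⟩ := h n _ hpos
    obtain ⟨m, z, hz, hz1, hz2⟩ := exists_block_near hpos (by linarith) ht1 ht2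
    exact ⟨(t, m, z), ht, hz, hz1, hz2.trans (by linarith)⟩
  obtain ⟨M, p, hM, -, hp, hen⟩ := exists_chain (fun p => max (en p.1 + 1) p.2.1) h' 0
  refine ⟨M, fun k => (p k).2.2, fun k => (p k).1, ⟨hM, fun k i hi => ?_⟩, fun k => (hp k).2.2.1,
    fun k => (hp k).2.2.2.trans ?_, strictMono_nat_of_lt_succ fun k => ?_⟩
  · have := (hp k).2.1 i hi
    exact ⟨this.1, this.2.trans_le ((le_max_right _ _).trans (hen k))⟩
  · exact mul_le_mul_of_nonneg_left (pow_le_pow_of_le_one (by norm_num) (by norm_num) hM.le_apply)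
      hη.le
  · have h1 := (le_max_left _ _).trans (hen k)
    have h2 := (hp (k + 1)).1
    simp only [Function.comp]
    omega

/-- A lower `ℓ₁` estimate with one constant for all coefficients whose support has at most as many
elements as its minimum. -/
lemma Low.exists_bound {r : ℕ} {a : ℕ → ℕ} {z : ℕ → ℕ →₀ ℝ} (h : Low r a z) (ha : StrictMono a) :
    ∃ L : ℝ, 0 < L ∧ ∀ c : ℕ →₀ ℝ, (∀ i ∈ c.support, c.support.card ≤ i) →
      ∑ i ∈ c.support, |c i| ≤ L * N (LC z c) := by
  have hnn : StrictMono nn := strictMono_nat_of_lt_succ fun j => nn_lt_succ j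
  have hm := mm_pos (1 + r)
  refine ⟨4 * mm (1 + r), by positivity, fun c hc => h (1 + r) 1 hnn.le_apply c (sch_one ?_)⟩
  intro i hi
  obtain ⟨k, hk, rfl⟩ := Finset.mem_image.1 hi
  exact (Finset.card_image_le.trans (hc k hk)).trans (ha.le_apply.trans (Nat.le_succ _))

lemma pr_pr_self (n : ℕ) (x : X) : pr n (pr n x) = pr n x := by
  rw [pr_apply n x]
  refine pr_incl fun i hi => ?_
  by_contra hc
  rw [Finsupp.mem_support_iff, cut_apply, if_neg hc] at hi
  exact hi rfl

/-- The basis is shrinking: otherwise some functional is bounded below on a normalized block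
sequence, which contradicts `exists_small_convex`. -/
lemma shrinking (g : X →L[ℝ] ℝ) : Tendsto (fun n => ‖g - g.comp (pr n)‖) atTop (𝓝 0) := by
  by_contra hne
  obtain ⟨ε, hε, hev⟩ : ∃ ε > 0, ∀ n₀, ∃ n ≥ n₀, ε ≤ ‖g - g.comp (pr n)‖ := by
    rw [Metric.tendsto_atTop] at hne
    push Not at hne
    simpa [dist_eq_norm] using hne
  have hump : ∀ n₀ : ℕ, ∃ u : X, ‖u‖ = 1 ∧ pr n₀ u = 0 ∧ ε / 4 ≤ g u := fun n₀ => by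
    obtain ⟨n, hn, hn'⟩ := hev n₀
    obtain ⟨x, hx⟩ : ∃ x, ε / 2 * ‖x‖ < ‖(g - g.comp (pr n)) x‖ := by
      by_contra! hc
      linarith [ContinuousLinearMap.opNorm_le_bound _ (by positivity) hc]
    have hgx : (g - g.comp (pr n)) x = g (x - pr n x) := by simp
    rw [hgx] at hx
    set y := x - pr n x with hy
    have hy1 : ‖y‖ ≤ 2 * ‖x‖ := by linarith [norm_sub_le x (pr n x), norm_pr_le n x]
    have hy0 : 0 < ‖y‖ := by
      rw [norm_pos_iff]
      intro h0
      rw [h0, map_zero, norm_zero] at hx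
      nlinarith [norm_nonneg x]
    have hpr : pr n₀ y = 0 := by
      rw [pr_eq_sum]
      refine Finset.sum_eq_zero fun i hi => ?_
      have : coord i y = 0 := by
        rw [hy, map_sub, pr_apply, coord_incl, cut_apply,
          if_pos ((Finset.mem_range.1 hi).trans_le hn), sub_self]
      rw [this, zero_smul]
    obtain ⟨s, hs, hgs⟩ : ∃ s : ℝ, |s| = 1 ∧ s * g y = ‖g y‖ := by
      rw [Real.norm_eq_abs]
      rcases le_total 0 (g y) with h | h
      · exact ⟨1, by simp, by rw [abs_of_nonneg h, one_mul]⟩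
      · exact ⟨-1, by simp, by rw [abs_of_nonpos h]; ring⟩
    refine ⟨(s * ‖y‖⁻¹) • y, ?_, by rw [map_smul, hpr, smul_zero], ?_⟩
    · rw [norm_smul, Real.norm_eq_abs, abs_mul, hs, one_mul, abs_of_pos (inv_pos.2 hy0),
        inv_mul_cancel₀ hy0.ne']
    · rw [map_smul, smul_eq_mul, mul_right_comm, hgs, ← div_eq_mul_inv, le_div_iff₀ hy0]
      nlinarith
  obtain ⟨η, hη, hη1, hgη⟩ : ∃ η : ℝ, 0 < η ∧ η ≤ 1 ∧ ‖g‖ * η ≤ ε / 8 := by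
    have hg := norm_nonneg g
    refine ⟨min 1 (ε / 8 / (‖g‖ + 1)), by positivity, min_le_left _ _, ?_⟩
    have h1 : min 1 (ε / 8 / (‖g‖ + 1)) ≤ ε / 8 / (‖g‖ + 1) := min_le_right _ _
    rw [le_div_iff₀ (by positivity)] at h1
    have h2 : 0 < min 1 (ε / 8 / (‖g‖ + 1)) := by positivity
    nlinarith
  obtain ⟨a, z, t, hz, hzN, hzt, -⟩ := exists_glide
    (α := {p : ℕ × X // ‖p.2‖ = 1 ∧ ε / 4 ≤ g p.2}) (fun p => p.1.2) (fun p => p.1.1)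
    (fun n δ hδ => by
      obtain ⟨u, hu, hu0, hgu⟩ := hump n
      exact ⟨⟨(n, u), hu, hgu⟩, le_rfl, hu, by simp [hu0, hδ.le]⟩) hη hη1
  have hgz : ∀ k, ε / 8 ≤ g (incl (z k)) := fun k => by
    have h1 : |g ((t k).1.2 - incl (z k))| ≤ ‖g‖ * (η * (1 / 2) ^ k) :=
      (g.le_opNorm _).trans (mul_le_mul_of_nonneg_left (hzt k) (norm_nonneg _))
    have h2 : η * (1 / 2) ^ k ≤ η :=
      mul_le_of_le_one_right hη.le (pow_le_one₀ (by norm_num) (by norm_num))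
    have h3 : ‖g‖ * (η * (1 / 2) ^ k) ≤ ε / 8 :=
      (mul_le_mul_of_nonneg_left h2 (norm_nonneg _)).trans hgη
    rw [map_sub] at h1
    linarith [(abs_le.1 h1).2, (t k).2.2]
  have hg1 : 0 < ‖g‖ + 1 := by positivity
  obtain ⟨x, hx, hNx⟩ := exists_small_convex hz (fun i => (hzN i).le)
    (δ := ε / 8 / (‖g‖ + 1)) (by positivity)
  have hconv : convexHull ℝ (Set.range z) ⊆ {x | ε / 8 ≤ g (incl x)} := by
    refine convexHull_min (by rintro _ ⟨k, rfl⟩; exact hgz k) ?_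
    exact convex_halfSpace_ge (f := fun x => g (incl x))
      ((g.toLinearMap ∘ₗ incl).isLinear) _
  have h1 : ε / 8 ≤ g (incl x) := hconv hx
  have h2 : |g (incl x)| ≤ ‖g‖ * N x := by
    have := g.le_opNorm (incl x)
    rwa [norm_incl] at this
  rw [lt_div_iff₀ hg1] at hNx
  nlinarith [le_abs_self (g (incl x)), N_nonneg x]

lemma weaklyNull_of_coord {u : ℕ → X} {C : ℝ} (hu : ∀ k, ‖u k‖ ≤ C)
    (hc : ∀ i, Tendsto (fun k => coord i (u k)) atTop (𝓝 0)) : WeaklyNull u := by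
  intro g
  have hC : 0 ≤ C := (norm_nonneg _).trans (hu 0)
  rw [Metric.tendsto_atTop]
  intro ε hε
  obtain ⟨n, hn⟩ := (((shrinking g).mul_const C).eventually
    (gt_mem_nhds (show 0 * C < ε / 2 by rw [zero_mul]; exact half_pos hε))).exists
  have h1 : Tendsto (fun k => g (pr n (u k))) atTop (𝓝 0) := by
    simp only [pr_eq_sum, map_sum, map_smul, smul_eq_mul]
    have : Tendsto (fun k => ∑ i ∈ Finset.range n, coord i (u k) * g (bas i)) atTop
        (𝓝 (∑ i ∈ Finset.range n, 0 * g (bas i))) :=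
      tendsto_finsetSum _ fun i _ => (hc i).mul_const _
    simpa using this
  obtain ⟨K, hK⟩ := Metric.tendsto_atTop.1 h1 (ε / 2) (half_pos hε)
  refine ⟨K, fun k hk => ?_⟩
  have h2 := hK k hk
  rw [Real.dist_eq, sub_zero] at h2 ⊢
  have h3 : |(g - g.comp (pr n)) (u k)| ≤ ‖g - g.comp (pr n)‖ * C :=
    ((g - g.comp (pr n)).le_opNorm _).trans (mul_le_mul_of_nonneg_left (hu k) (norm_nonneg _))
  have h4 : g (u k) = (g - g.comp (pr n)) (u k) + g (pr n (u k)) := by simp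
  rw [h4]
  linarith [abs_add_le ((g - g.comp (pr n)) (u k)) (g (pr n (u k)))]

/-- The basis is boundedly complete: otherwise there are blocks bounded below in norm with bounded
sums, which contradicts the lower `ℓ₁` estimate. -/
lemma boundedly_complete {b : ℕ → ℝ} {C : ℝ}
    (hb : ∀ n, N (∑ i ∈ Finset.range n, Finsupp.single i (b i)) ≤ C) :
    CauchySeq fun n => incl (∑ i ∈ Finset.range n, Finsupp.single i (b i)) := by
  set σ : ℕ → ℕ →₀ ℝ := fun n => ∑ i ∈ Finset.range n, Finsupp.single i (b i) with hσ
  have hσa : ∀ n i, σ n i = if i < n then b i else 0 := fun n i => by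
    simp [hσ, Finsupp.finsetSum_apply, Finsupp.single_apply]
  rw [Metric.cauchySeq_iff']
  by_contra! hc
  obtain ⟨ε, hε, hc⟩ := hc
  have h' : ∀ n, ∃ m, n ≤ m ∧ ε ≤ N (σ m - σ n) := fun n => by
    obtain ⟨m, hm, hm'⟩ := hc n
    rw [dist_eq_norm, ← map_sub, norm_incl] at hm'
    exact ⟨m, hm, hm'⟩
  obtain ⟨M, p, hM, -, hp, hpM⟩ := exists_chain (fun m => m) h' 0
  set w : ℕ → ℕ →₀ ℝ := fun k => σ (p k) - σ (M k) with hw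
  have hwa : ∀ k i, w k i = if M k ≤ i ∧ i < p k then b i else 0 := fun k i => by
    have h1 := (hp k).1
    rw [hw, Finsupp.sub_apply, hσa, hσa]
    split_ifs <;> first | omega | simp
  have hw0 : ∀ k, 0 < N (w k) := fun k => hε.trans_le (hp k).2
  have hz : Block M fun k => (N (w k))⁻¹ • w k := ⟨hM, fun k i hi => by
    have hi' : w k i ≠ 0 := fun h => by simp [h] at hi
    rw [hwa] at hi'
    have := (ite_ne_right_iff.1 hi').1
    exact ⟨this.1, this.2.trans_le (hpM k)⟩⟩
  obtain ⟨φ, a, r, hφ, hB, hlow⟩ := exists_low hz fun k => by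
    rw [N_smul, abs_of_pos (inv_pos.2 (hw0 k)), inv_mul_cancel₀ (hw0 k).ne']
  obtain ⟨L, hL, hLc⟩ := hlow.exists_bound hB.mono
  obtain ⟨K, hK⟩ := exists_nat_gt (L * C / ε)
  rw [div_lt_iff₀ hε] at hK
  -- the vector `∑_{K ≤ k < 2 * K} w (φ k)` is dominated by `σ n` for large `n`
  set c : ℕ →₀ ℝ := ∑ k ∈ Finset.Ico K (2 * K), Finsupp.single k (N (w (φ k))) with hcdef
  have hca : ∀ k, c k = if k ∈ Finset.Ico K (2 * K) then N (w (φ k)) else 0 := fun k => by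
    simp only [hcdef, Finsupp.finsetSum_apply, Finsupp.single_apply, Finset.sum_ite_eq']
  have hcs : c.support = Finset.Ico K (2 * K) := by
    ext k
    rw [Finsupp.mem_support_iff, hca]
    have := (hw0 (φ k)).ne'
    simp [this]
  have hcard : c.support.card = K := by rw [hcs, Nat.card_Ico]; omega
  have h1 := hLc c fun i hi => by
    rw [hcard]
    rw [hcs] at hi
    exact (Finset.mem_Ico.1 hi).1
  have h2 : K * ε ≤ ∑ i ∈ c.support, |c i| := by
    rw [hcs]
    have : ∑ i ∈ Finset.Ico K (2 * K), ε = K * ε := by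
      rw [Finset.sum_const, ← hcs, hcard, nsmul_eq_mul]
    rw [← this]
    refine Finset.sum_le_sum fun i hi => ?_
    rw [hca, if_pos hi, abs_of_pos (hw0 _)]
    exact (hp _).2
  have h3 : LC ((fun k => (N (w k))⁻¹ • w k) ∘ φ) c = ∑ k ∈ Finset.Ico K (2 * K), w (φ k) := by
    rw [LC_eq, hcs]
    refine Finset.sum_congr rfl fun k hk => ?_
    rw [hca, if_pos hk, Function.comp_apply, smul_smul, mul_inv_cancel₀ (hw0 _).ne', one_smul]
  have h4 : N (∑ k ∈ Finset.Ico K (2 * K), w (φ k)) ≤ C := by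
    refine le_trans (N_mono fun i => ?_) (hb (M (φ (2 * K))))
    change _ ≤ |σ _ i|
    rw [Finsupp.finsetSum_apply]
    by_cases hex : ∃ k ∈ Finset.Ico K (2 * K), w (φ k) i ≠ 0
    · obtain ⟨k, hk, hki⟩ := hex
      rw [Finset.sum_eq_single_of_mem k hk]
      · rw [hwa] at hki ⊢
        have hki' := (ite_ne_right_iff.1 hki).1
        rw [if_pos hki', hσa, if_pos]
        have : M (φ k + 1) ≤ M (φ (2 * K)) :=
          hM.monotone (hφ (Finset.mem_Ico.1 hk).2)
        exact hki'.2.trans_le ((hpM _).trans this)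
      · intro l hl hlk
        by_contra hli
        rw [hwa] at hki hli
        have h5 := (ite_ne_right_iff.1 hki).1
        have h6 := (ite_ne_right_iff.1 hli).1
        have h7 := hpM (φ k)
        have h8 := hpM (φ l)
        rcases lt_or_gt_of_ne hlk with h | h
        · have : M (φ l + 1) ≤ M (φ k) := hM.monotone (hφ h)
          omega
        · have : M (φ k + 1) ≤ M (φ l) := hM.monotone (hφ h)
          omega
    · push Not at hex
      rw [Finset.sum_eq_zero hex, abs_zero]
      exact abs_nonneg _
  rw [h3] at h1
  nlinarith

/-- One half of a theorem of James: the functional `Φ` on the dual is represented by the sum of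
the `Φ (coord i) • bas i`, which converges as the basis is boundedly complete and represents `Φ`
as it is shrinking. -/
lemma reflexive : Function.Surjective (NormedSpace.inclusionInDoubleDual ℝ X) := by
  intro Φ
  have hΦ : 0 ≤ ‖Φ‖ := Φ.opNorm_nonneg
  set b : ℕ → ℝ := fun i => Φ (coord i) with hb
  have hpair : ∀ (g : X →L[ℝ] ℝ) n,
      g (incl (∑ i ∈ Finset.range n, Finsupp.single i (b i))) = Φ (g.comp (pr n)) := fun g n => by
    have h1 : g.comp (pr n) = ∑ i ∈ Finset.range n, g (bas i) • coord i := by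
      ext x
      simp [pr_eq_sum, mul_comm]
    rw [h1, ← sum_bas]
    simp [hb, mul_comm]
  have hcauchy := boundedly_complete (b := b) (C := ‖Φ‖) fun n => by
    rw [← norm_incl]
    refine NormedSpace.norm_le_dual_bound ℝ _ hΦ fun g => ?_
    rw [hpair]
    refine (Φ.le_opNorm _).trans (mul_le_mul_of_nonneg_left ?_ hΦ)
    refine ContinuousLinearMap.opNorm_le_bound _ (norm_nonneg _) fun x => ?_
    exact (g.le_opNorm _).trans (mul_le_mul_of_nonneg_left (norm_pr_le n x) (norm_nonneg _))
  obtain ⟨x, hx⟩ := cauchySeq_tendsto_of_complete hcauchy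
  refine ⟨x, ContinuousLinearMap.ext fun g => ?_⟩
  rw [NormedSpace.dual_def]
  have h1 : Tendsto (fun n => Φ (g.comp (pr n))) atTop (𝓝 (g x)) := by
    simpa only [Function.comp_def, hpair] using (g.continuous.tendsto x).comp hx
  have h2 : Tendsto (fun n => g.comp (pr n)) atTop (𝓝 g) := by
    rw [tendsto_iff_norm_sub_tendsto_zero]
    simpa only [norm_sub_rev] using shrinking g
  exact tendsto_nhds_unique h1 ((Φ.continuous.tendsto g).comp h2)

/-! ### The two spreading model properties -/

lemma exists_pow_half_le {δ : ℝ} (hδ : 0 < δ) : ∃ K : ℕ, ∀ k ≥ K, (1 / 2 : ℝ) ^ k ≤ δ := by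
  obtain ⟨K, hK⟩ := exists_pow_lt_of_lt_one hδ (show (1 / 2 : ℝ) < 1 by norm_num)
  exact ⟨K, fun k hk => (pow_le_pow_of_le_one (by norm_num) (by norm_num) hk).trans hK.le⟩

lemma tendsto_pr_of_weaklyNull {x : ℕ → X} (hx : WeaklyNull x) (n : ℕ) :
    Tendsto (fun k => ‖pr n (x k)‖) atTop (𝓝 0) := by
  have : Tendsto (fun k => pr n (x k)) atTop (𝓝 (∑ i ∈ Finset.range n, (0 : ℝ) • bas i)) := by
    simp only [pr_eq_sum]
    exact tendsto_finsetSum _ fun i _ => (hx (coord i)).smul_const _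
  simpa using this.norm

/-- A subsequence of a normalized weakly null sequence satisfies a lower `ℓ₁` estimate on
`m`-tuples beyond `K` and `m`. -/
lemma exists_far_lower {x : ℕ → X} (hx : Normalized x) (hw : WeaklyNull x) :
    ∃ φ : ℕ → ℕ, StrictMono φ ∧ ∃ L : ℝ, 0 < L ∧ ∃ K : ℕ, ∀ (m : ℕ) (q : Fin m → ℕ) (a : Fin m → ℝ),
      Function.Injective q → (∀ i, K ≤ q i ∧ m ≤ q i) →
      ∑ i, |a i| ≤ L * ‖∑ i, a i • x (φ (q i))‖ := by
  obtain ⟨a, z, t, hz, hzN, hzt, ht⟩ := exists_glide x id (fun n ε hε => by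
    obtain ⟨t, h1, h2⟩ := (((tendsto_pr_of_weaklyNull hw n).eventually (gt_mem_nhds hε)).and
      (eventually_ge_atTop n)).exists
    exact ⟨t, h2, hx t, h1.le⟩) one_pos le_rfl
  obtain ⟨φ, M, r, hφ, hB, hlow⟩ := exists_low hz hzN
  obtain ⟨L, hL, hLc⟩ := hlow.exists_bound hB.mono
  obtain ⟨K, hK⟩ := exists_pow_half_le (show 0 < 1 / (2 * L) by positivity)
  refine ⟨t ∘ φ, StrictMono.comp ht hφ, 2 * L, by positivity, K, fun m q c hq hqK => ?_⟩
  set d : ℕ →₀ ℝ := Finsupp.mapDomain q (Finsupp.equivFunOnFinite.symm c) with hd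
  have hds : d.support ⊆ Finset.univ.image q :=
    Finsupp.mapDomain_support.trans (Finset.image_subset_image (Finset.subset_univ _))
  have hcard : d.support.card ≤ m :=
    (Finset.card_le_card hds).trans (Finset.card_image_le.trans (by simp))
  have h1 := hLc d fun i hi => by
    obtain ⟨l, -, rfl⟩ := Finset.mem_image.1 (hds hi)
    exact hcard.trans (hqK l).2
  have h2 : ∑ i ∈ d.support, |d i| = ∑ i, |c i| := by
    change d.sum (fun _ r => |r|) = _
    rw [hd, Finsupp.sum_mapDomain_index_inj hq, Finsupp.sum_fintype _ _ (by simp)]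
    rfl
  have h3 : LC (z ∘ φ) d = ∑ i, c i • z (φ (q i)) := by
    rw [LC_eq]
    change d.sum (fun k r => r • (z ∘ φ) k) = _
    rw [hd, Finsupp.sum_mapDomain_index_inj hq, Finsupp.sum_fintype _ _ (by simp)]
    rfl
  rw [h2, h3, ← norm_incl] at h1
  have h4 : ‖incl (∑ i, c i • z (φ (q i))) - ∑ i, c i • x (t (φ (q i)))‖
      ≤ 1 / (2 * L) * ∑ i, |c i| := by
    rw [map_sum, ← Finset.sum_sub_distrib, Finset.mul_sum]
    refine (norm_sum_le _ _).trans (Finset.sum_le_sum fun i _ => ?_)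
    rw [map_smul, ← smul_sub, norm_smul, Real.norm_eq_abs, mul_comm, norm_sub_rev]
    refine mul_le_mul_of_nonneg_right ?_ (abs_nonneg _)
    refine (hzt _).trans ?_
    rw [one_mul]
    exact hK _ ((hqK i).1.trans hφ.le_apply)
  have h5 := norm_sub_norm_le (incl (∑ i, c i • z (φ (q i)))) (∑ i, c i • x (t (φ (q i))))
  have h6 : L * (1 / (2 * L) * ∑ i, |c i|) = (∑ i, |c i|) / 2 := by field_simp
  have h7 := mul_le_mul_of_nonneg_left (h5.trans h4) hL.le
  simp only [Function.comp_apply]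
  nlinarith

/-- Every normalized weakly null sequence has a subsequence generating an `ℓ₁` spreading model. -/
lemma part_one {x : ℕ → X} (hx : Normalized x) (hw : WeaklyNull x) :
    ∃ φ : ℕ → ℕ, StrictMono φ ∧ ∃ ν, GeneratesSpreadingModel (x ∘ φ) ν ∧
      ∃ C : ℝ, 1 ≤ C ∧ NormFamEquiv C l1Norm ν := by
  obtain ⟨φ, hφ, L, hL, K, hK⟩ := exists_far_lower hx hw
  obtain ⟨ψ, hψ, ν, hν⟩ := exists_spreading_model (x := x ∘ φ) fun i => (hx _).le
  refine ⟨φ ∘ ψ, hφ.comp hψ, ν, hν, max 1 L, le_max_left _ _, L, 1, hL, one_pos,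
    by rw [mul_one]; exact le_max_right _ _, fun m a => ?_⟩
  have key : ∀ ε > 0, (1 / L) * l1Norm m a ≤ ν m a + ε ∧ ν m a ≤ 1 * l1Norm m a + ε := by
    intro ε hε
    obtain ⟨n, hn⟩ := hν m a ε hε
    have hmono : StrictMono fun i : Fin m => n + K + m + (i : ℕ) := fun i j hij => by
      simpa using hij
    have h1 := abs_lt.1 (hn (fun i => n + K + m + (i : ℕ)) hmono fun i => by omega)
    have h2 := hK m (fun i => ψ (n + K + m + (i : ℕ))) a (hψ.injective.comp hmono.injective)
      fun i => ⟨le_trans (by omega) (hψ.le_apply (x := n + K + m + (i : ℕ))),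
        le_trans (by omega) (hψ.le_apply (x := n + K + m + (i : ℕ)))⟩
    have h3 : ‖∑ i : Fin m, a i • ((x ∘ φ) ∘ ψ) (n + K + m + (i : ℕ))‖ ≤ ∑ i, |a i| := by
      refine (norm_sum_le _ _).trans (Finset.sum_le_sum fun i _ => ?_)
      rw [norm_smul, Real.norm_eq_abs]
      exact mul_le_of_le_one_right (abs_nonneg _) (hx _).le
    simp only [Function.comp_apply] at h1 h2 h3
    have h4 : (1 / L) * l1Norm m a ≤ ‖∑ i, a i • x (φ (ψ (n + K + m + (i : ℕ))))‖ := by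
      rw [one_div, inv_mul_le_iff₀ hL]
      exact h2
    refine ⟨by linarith, ?_⟩
    rw [one_mul]
    change _ ≤ ∑ i, |a i| + ε
    linarith
  exact ⟨le_of_forall_pos_le_add fun ε hε => (key ε hε).1,
    le_of_forall_pos_le_add fun ε hε => (key ε hε).2⟩

/-- An infinite dimensional subspace contains unit vectors vanishing on the first `n` coordinates.
-/
lemma exists_mem_pr_eq_zero {Y : Submodule ℝ X} (hY : ¬ FiniteDimensional ℝ Y) (n : ℕ) :
    ∃ y ∈ Y, ‖y‖ = 1 ∧ pr n y = 0 := by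
  let f : Y →ₗ[ℝ] (Fin n → ℝ) := LinearMap.pi fun i => (coord i).toLinearMap ∘ₗ Y.subtype
  have hf : ¬ Function.Injective f := fun h => hY (Module.Finite.of_injective f h)
  rw [← LinearMap.ker_eq_bot, Submodule.eq_bot_iff] at hf
  push Not at hf
  obtain ⟨y, hy, hy0⟩ := hf
  have hyn : 0 < ‖(y : X)‖ := norm_pos_iff.2 (by simpa using hy0)
  refine ⟨‖(y : X)‖⁻¹ • (y : X), Y.smul_mem _ y.2, ?_, ?_⟩
  · rw [norm_smul, norm_inv, norm_norm, inv_mul_cancel₀ hyn.ne']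
  · rw [map_smul, pr_eq_sum, Finset.sum_eq_zero, smul_zero]
    intro i hi
    have : coord i y = 0 := congrFun (LinearMap.mem_ker.1 hy) ⟨i, Finset.mem_range.1 hi⟩
    rw [this, zero_smul]

lemma abs_coeff_le {a : ℕ → ℕ} {v : ℕ → ℕ →₀ ℝ} (hv : Block a v) (hN : ∀ i, N (v i) = 1)
    (c : ℕ →₀ ℝ) (i : ℕ) : |c i| ≤ N (LC v c) := by
  have h1 : |c i| = N (c i • v i) := by rw [N_smul, hN, mul_one]
  rw [h1]
  refine N_mono fun l => ?_
  by_cases hl : (c i • v i) l = 0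
  · rw [hl, abs_zero]; exact abs_nonneg _
  have hci : i ∈ c.support := Finsupp.mem_support_iff.2 fun h => hl (by simp [h])
  have hvi : l ∈ (v i).support := Finsupp.mem_support_iff.2 fun h => hl (by simp [h])
  rw [LC_eq, Finsupp.finsetSum_apply, Finset.sum_eq_single_of_mem i hci]
  intro k _ hk
  by_contra hne
  have hvk : l ∈ (v k).support := Finsupp.mem_support_iff.2 fun h => hne (by simp [h])
  have h2 := hv.supp i l hvi
  have h3 := hv.supp k l hvk
  rcases lt_or_gt_of_ne hk with h | h
  · have : a (k + 1) ≤ a i := hv.mono.monotone h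
    omega
  · have : a (i + 1) ≤ a k := hv.mono.monotone h
    omega

lemma norm_normalize_sub_le {u w : X} (hw : ‖w‖ = 1) {ε : ℝ} (h : ‖u - w‖ ≤ ε) (hε : ε < 1) :
    ‖‖u‖⁻¹ • u‖ = 1 ∧ ‖‖u‖⁻¹ • u - w‖ ≤ 2 * ε := by
  have h1 : |‖u‖ - 1| ≤ ε := by
    rw [← hw]; exact (abs_norm_sub_norm_le u w).trans h
  have hu : 0 < ‖u‖ := by linarith [(abs_le.1 h1).1]
  refine ⟨by rw [norm_smul, norm_inv, norm_norm, inv_mul_cancel₀ hu.ne'], ?_⟩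
  have h2 : ‖‖u‖⁻¹ • u - u‖ = |‖u‖ - 1| := by
    have : ‖u‖⁻¹ • u - u = (‖u‖⁻¹ - 1) • u := by rw [sub_smul, one_smul]
    rw [this, norm_smul, Real.norm_eq_abs]
    nth_rewrite 2 [← abs_of_pos hu]
    rw [← abs_mul, sub_mul, inv_mul_cancel₀ hu.ne', one_mul, abs_sub_comm]
  have h3 : ‖u‖⁻¹ • u - w = (‖u‖⁻¹ • u - u) + (u - w) := by abel
  rw [h3]
  linarith [norm_add_le (‖u‖⁻¹ • u - u) (u - w)]

/-- The blocks of `exists_bad` are approximated by unit vectors of a given infinite dimensional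
subspace. -/
lemma exists_bad_seq {Y : Submodule ℝ X} (hY : ¬ FiniteDimensional ℝ Y) {j : ℕ} (hj : 1 ≤ j) :
    ∃ (a : ℕ → ℕ) (w : ℕ → ℕ →₀ ℝ) (x : ℕ → X), Block a w ∧ (∀ k, x k ∈ Y) ∧ (∀ k, ‖x k‖ = 1) ∧
      (∀ k, ‖x k - incl (w k)‖ ≤ (1 / 2) ^ k) ∧
      ∀ A : Finset ℕ, A.card = 2 * mm (j + 1) → (∀ k ∈ A, j + 1 ≤ k) →
        N ((A.card : ℝ)⁻¹ • ∑ k ∈ A, w k) ≤ 20 / (j + 5) := by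
  obtain ⟨a, z, t, hz, hzN, hzt, -⟩ := exists_glide
    (α := ℕ × Y) (fun p => (p.2 : X)) (fun p => p.1)
    (fun n δ hδ => by
      obtain ⟨y, hyY, hy, hy0⟩ := exists_mem_pr_eq_zero hY n
      exact ⟨(n, ⟨y, hyY⟩), le_rfl, hy, by simp [hy0, hδ.le]⟩)
    (η := 1 / 8) (by norm_num) (by norm_num)
  obtain ⟨φ, b, r, hφ, hB, hlow⟩ := exists_low hz hzN
  obtain ⟨M, ξ, hM, hξ, hξN, hbad⟩ := exists_bad hB (fun i => hzN _) hlow hj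
  set u : ℕ → X := fun k => ∑ i ∈ (ξ k).support, ξ k i • ((t (φ i)).2 : X) with hu
  have huw : ∀ k, ‖u k - incl (LC (z ∘ φ) (ξ k))‖ ≤ 1 / 4 * (1 / 2) ^ k := fun k => by
    have h1 : ‖u k - incl (LC (z ∘ φ) (ξ k))‖ ≤ ∑ i ∈ (ξ k).support, 1 / 8 * (1 / 2 : ℝ) ^ i := by
      rw [LC_eq, map_sum, hu, ← Finset.sum_sub_distrib]
      refine (norm_sum_le _ _).trans (Finset.sum_le_sum fun i _ => ?_)
      rw [map_smul, ← smul_sub, norm_smul, Real.norm_eq_abs]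
      have h2 : |ξ k i| ≤ 1 := by
        rw [← hξN k]; exact abs_coeff_le hB (fun i => hzN _) _ _
      have h3 : ‖((t (φ i)).2 : X) - incl ((z ∘ φ) i)‖ ≤ 1 / 8 * (1 / 2 : ℝ) ^ i :=
        (hzt (φ i)).trans (mul_le_mul_of_nonneg_left
          (pow_le_pow_of_le_one (by norm_num) (by norm_num) hφ.le_apply) (by norm_num))
      calc _ ≤ 1 * (1 / 8 * (1 / 2 : ℝ) ^ i) :=
            mul_le_mul h2 h3 (norm_nonneg _) zero_le_one
        _ = _ := one_mul _
    refine h1.trans ?_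
    have h4 : (ξ k).support ⊆ Finset.Ico k (M (k + 1)) := fun i hi => by
      have := hξ k i hi
      exact Finset.mem_Ico.2 ⟨hM.le_apply.trans this.1, this.2⟩
    have h5 : ∑ i ∈ (ξ k).support, (1 / 2 : ℝ) ^ i ≤ (1 / 2) ^ k / (1 - 1 / 2) :=
      (Finset.sum_le_sum_of_subset_of_nonneg h4 fun _ _ _ => by positivity).trans
        (geom_sum_Ico_le_of_lt_one (by norm_num) (by norm_num))
    have h6 : (1 / 2 : ℝ) ^ k / (1 - 1 / 2) = 2 * (1 / 2) ^ k := by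
      rw [div_eq_iff (by norm_num)]; ring
    rw [h6] at h5
    rw [← Finset.mul_sum]
    linarith
  have hpow : ∀ k : ℕ, (1 / 2 : ℝ) ^ k ≤ 1 := fun k => pow_le_one₀ (by norm_num) (by norm_num)
  have hnorm := fun k => norm_normalize_sub_le (by rw [norm_incl]; exact hξN k) (huw k)
    (by linarith [hpow k])
  refine ⟨_, _, fun k => ‖u k‖⁻¹ • u k, hB.LC hM hξ, fun k => ?_, fun k => (hnorm k).1,
    fun k => (hnorm k).2.trans ?_, hbad⟩
  · exact Y.smul_mem _ (Y.sum_mem fun i _ => Y.smul_mem _ (t (φ i)).2.2)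
  · have : (0 : ℝ) ≤ (1 / 2) ^ k := by positivity
    linarith

lemma weaklyNull_of_near_block {a : ℕ → ℕ} {w : ℕ → ℕ →₀ ℝ} {x : ℕ → X} (hw : Block a w)
    (hx : ∀ k, ‖x k‖ = 1) (h : ∀ k, ‖x k - incl (w k)‖ ≤ (1 / 2) ^ k) : WeaklyNull x := by
  refine weaklyNull_of_coord (fun k => (hx k).le) fun i => ?_
  have h0 : Tendsto (fun k => x k - incl (w k)) atTop (𝓝 0) :=
    squeeze_zero_norm h (tendsto_pow_atTop_nhds_zero_of_lt_one (by norm_num) (by norm_num))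
  have h1 := ((coord i).continuous.tendsto 0).comp h0
  rw [map_zero] at h1
  refine h1.congr' ?_
  filter_upwards [eventually_gt_atTop i] with k hk
  have h2 : w k i = 0 := by
    by_contra hne
    have := (hw.supp k i (Finsupp.mem_support_iff.2 hne)).1
    have := hw.mono.le_apply (x := k)
    omega
  rw [Function.comp_apply, map_sub, coord_incl, h2, sub_zero]

/-- No constant `C` works for all spreading models of a subspace: `C`-equivalence would bound the
averages of the sequence from `exists_bad_seq` below by `1 / C`, and these are smaller once `j` is
large. -/
lemma part_two {Y : Submodule ℝ X} (hY : ¬ FiniteDimensional ℝ Y) {C : ℝ} (hC : 1 ≤ C) :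
    ∃ x : ℕ → X, (∀ i, x i ∈ Y) ∧ Normalized x ∧ WeaklyNull x ∧
      ∃ ν, GeneratesSpreadingModel x ν ∧ ¬ NormFamEquiv C l1Norm ν := by
  have hC0 : 0 < C := by linarith
  obtain ⟨j, hj⟩ := exists_nat_ge (80 * C)
  have hj1 : 1 ≤ j := by
    have : (1 : ℝ) ≤ j := by linarith
    exact_mod_cast this
  obtain ⟨a, w, x, hw, hxY, hx, hxw, hbad⟩ := exists_bad_seq hY hj1
  obtain ⟨ψ, hψ, ν, hν⟩ := exists_spreading_model fun i => (hx i).le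
  refine ⟨x ∘ ψ, fun i => hxY _, fun i => hx _, fun g =>
    (weaklyNull_of_near_block hw hx hxw g).comp hψ.tendsto_atTop, ν, hν, ?_⟩
  rintro ⟨A, B, hA, hB, hAB, hequiv⟩
  -- the spreading model is normalized, so `B ≥ 1` and hence `A ≤ C`
  have hν1 : ν 1 (fun _ => 1) = 1 := by
    refine eq_of_forall_dist_le fun ε hε => ?_
    obtain ⟨n, hn⟩ := hν 1 (fun _ => 1) ε hε
    have := hn (fun _ => n) (Subsingleton.strictMono _) fun _ => le_rfl
    rw [Fin.sum_univ_one, one_smul, Function.comp_apply, hx] at this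
    rw [Real.dist_eq, abs_sub_comm]
    exact this.le
  have hB1 : 1 ≤ B := by
    have := (hequiv 1 fun _ => 1).2
    rwa [hν1, l1Norm, Fin.sum_univ_one, abs_one, mul_one] at this
  have hAC : A ≤ C := by nlinarith
  set K : ℕ := 2 * mm (j + 1) with hK
  have hK0 : (0 : ℝ) < K := by
    have := mm_pos (j + 1)
    rw [hK]; push_cast; linarith
  have hlow : 1 / C ≤ ν K (fun _ => (K : ℝ)⁻¹) := by
    refine le_trans ?_ (hequiv K _).1
    rw [l1Norm, Finset.sum_const, Finset.card_univ, Fintype.card_fin, nsmul_eq_mul,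
      abs_of_pos (inv_pos.2 hK0), mul_inv_cancel₀ hK0.ne', mul_one]
    exact one_div_le_one_div_of_le hA hAC
  obtain ⟨n, hn⟩ := hν K (fun _ => (K : ℝ)⁻¹) (1 / (4 * C)) (by positivity)
  obtain ⟨n', hn'⟩ := exists_pow_half_le (show 0 < 1 / (4 * C) by positivity)
  set q : Fin K → ℕ := fun i => n + n' + j + 1 + (i : ℕ) with hq
  have hqm : StrictMono q := fun i l hil => by simpa [hq] using hil
  have hψq : ∀ i, n' ≤ ψ (q i) ∧ j + 1 ≤ ψ (q i) := fun i => by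
    have := hψ.le_apply (x := q i)
    simp only [hq] at this ⊢
    omega
  have h1 := (abs_lt.1 (hn q hqm fun i => by simp only [hq]; omega)).1
  have hinj : Function.Injective (ψ ∘ q) := hψ.injective.comp hqm.injective
  have hcard : (Finset.univ.image (ψ ∘ q)).card = K := by
    rw [Finset.card_image_of_injective _ hinj, Finset.card_univ, Fintype.card_fin]
  have h2 := hbad (Finset.univ.image (ψ ∘ q)) hcard fun k hk => by
    obtain ⟨i, -, rfl⟩ := Finset.mem_image.1 hk
    exact (hψq i).2
  rw [hcard, Finset.sum_image hinj.injOn, ← norm_incl, map_smul, map_sum] at h2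
  have h3 : ‖∑ i, (K : ℝ)⁻¹ • (x ∘ ψ) (q i) - (K : ℝ)⁻¹ • ∑ i, incl (w ((ψ ∘ q) i))‖
      ≤ 1 / (4 * C) := by
    rw [← Finset.smul_sum, ← smul_sub, ← Finset.sum_sub_distrib, norm_smul, Real.norm_eq_abs,
      abs_of_pos (inv_pos.2 hK0), inv_mul_le_iff₀ hK0]
    have h4 : ∑ _i : Fin K, 1 / (4 * C) = K * (1 / (4 * C)) := by
      rw [Finset.sum_const, Finset.card_univ, Fintype.card_fin, nsmul_eq_mul]
    rw [← h4]
    exact (norm_sum_le _ _).trans (Finset.sum_le_sum fun i _ =>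
      (hxw _).trans (hn' _ (hψq i).1))
  have h5 := norm_sub_norm_le (∑ i, (K : ℝ)⁻¹ • (x ∘ ψ) (q i))
    ((K : ℝ)⁻¹ • ∑ i, incl (w ((ψ ∘ q) i)))
  have h6 : (20 : ℝ) / (j + 5) ≤ 1 / (4 * C) := by
    rw [div_le_div_iff₀ (by positivity) (by positivity)]
    linarith
  have h7 : 1 / C = 4 * (1 / (4 * C)) := by field_simp
  have h8 : 0 < 1 / (4 * C) := by positivity
  linarith

end L1SM

end

/-- There exists a reflexive Banach space `X` with a 1-unconditional
Schauder basis such that (i) every normalized weakly null sequence has a subsequence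
generating a spreading model equivalent to the unit vector basis of ℓ₁; (ii) in every
infinite dimensional closed subspace of `X` and for every `C ≥ 1` there is a normalized
weakly null sequence generating a spreading model that is not `C`-equivalent to the unit
vector basis of ℓ₁. -/
theorem statement3 :
    ∃ B : BanachPkg, CompleteSpace B.X ∧
      Function.Surjective (NormedSpace.inclusionInDoubleDual ℝ B.X) ∧
      ∃ e : ℕ → B.X, IsSchauderBasis e ∧ OneUnconditional e ∧
        (∀ x : ℕ → B.X, Normalized x → WeaklyNull x →
          ∃ φ : ℕ → ℕ, StrictMono φ ∧
            ∃ ν, GeneratesSpreadingModel (x ∘ φ) ν ∧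
              ∃ C : ℝ, 1 ≤ C ∧ NormFamEquiv C l1Norm ν) ∧
        (∀ Y : Submodule ℝ B.X, IsClosed (Y : Set B.X) → ¬ FiniteDimensional ℝ Y →
          ∀ C : ℝ, 1 ≤ C →
            ∃ x : ℕ → B.X, (∀ i, x i ∈ Y) ∧ Normalized x ∧ WeaklyNull x ∧
              ∃ ν, GeneratesSpreadingModel x ν ∧ ¬ NormFamEquiv C l1Norm ν) :=
  ⟨⟨L1SM.X⟩, inferInstanceAs (CompleteSpace L1SM.X), L1SM.reflexive, L1SM.bas,
    L1SM.isSchauderBasis_bas, L1SM.oneUnconditional_bas,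
    fun _ hx hw => L1SM.part_one hx hw, fun _ _ hY _ hC => L1SM.part_two hY hC⟩
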